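/- The Weak Diagonal Lemma implies Rosser's Theorem: if T is a consistent recursively enumerable extension of Robinson's arithmetic such that for every formula Ψ(x) some sentence θ makes T + (Ψ(⌜θ⌝) ↔ θ) consistent, then there exists a sentence independent from T. -/

import Mathlib

open FirstOrder Language

/-- Function symbols of the language of arithmetic: 0, 1, +, ×. -/
inductive ArithFunc : ℕ → Type
  | zero : ArithFunc 0
  | one : ArithFunc 0
  | add : ArithFunc 2
  | mul : ArithFunc 2

/-- Relation symbols of the language of arithmetic: <. -/
inductive ArithRel : ℕ → Type
  | lt : ArithRel 2

/-- The first-order language of arithmetic. -/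
def LA : FirstOrder.Language := ⟨ArithFunc, ArithRel⟩

/-- The standard model ℕ of arithmetic. -/
instance : LA.Structure ℕ where
  funMap := fun {_} f => match f with
    | .zero => fun _ => 0
    | .one => fun _ => 1
    | .add => fun v => v 0 + v 1
    | .mul => fun v => v 0 * v 1
  RelMap := fun {_} r => match r with
    | .lt => fun v => v 0 < v 1

instance : Encodable (Σ n, LA.Functions n) :=
  Encodable.ofEquiv (Fin 4)
    { toFun := fun f => match f with
        | ⟨0, .zero⟩ => 0
        | ⟨0, .one⟩ => 1
        | ⟨2, .add⟩ => 2
        | ⟨2, .mul⟩ => 3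
      invFun := fun i => match i with
        | 0 => ⟨0, .zero⟩
        | 1 => ⟨0, .one⟩
        | 2 => ⟨2, .add⟩
        | 3 => ⟨2, .mul⟩
      left_inv := by rintro ⟨n, f⟩ <;> cases f <;> rfl
      right_inv := by intro i; fin_cases i <;> rfl }

instance : Encodable (Σ n, LA.Relations n) :=
  Encodable.ofEquiv (Fin 1)
    { toFun := fun f => match f with
        | ⟨2, .lt⟩ => 0
      invFun := fun _ => ⟨2, .lt⟩
      left_inv := by rintro ⟨n, r⟩; cases r; rfl
      right_inv := by intro i; fin_cases i; rfl }

/-- A canonical (computable, injective) Gödel numbering `⌜·⌝` of sentences,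
via Mathlib's list encoding of first-order formulas. -/
def godelCode (φ : LA.Sentence) : ℕ :=
  Encodable.encode φ.listEncode

/-- The numeral `n̄`: `0̄ = 0`, `1̄ = 1`, `(m+1)̄ = 1 + m̄`. -/
def numeral (α : Type) : ℕ → LA.Term α
  | 0 => Constants.term ArithFunc.zero
  | 1 => Constants.term ArithFunc.one
  | n + 2 => Functions.apply₂ (L := LA) ArithFunc.add
      (Constants.term ArithFunc.one) (numeral α (n + 1))

/-- `ℕ ⊨ Ψ(⌜θ⌝)`: the formula `Ψ(x)` holds in the standard model ℕ at the
Gödel code of the sentence `θ`. -/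
def RealizeAtCode (Ψ : LA.Formula (Fin 1)) (θ : LA.Sentence) : Prop :=
  Ψ.Realize (M := ℕ) (fun _ => (godelCode θ : ℕ))

/-- A theory is consistent iff it does not prove (have as a consequence) falsum. -/
def Consistent (T : LA.Theory) : Prop :=
  ¬ (T ⊨ᵇ (⊥ : LA.Sentence))

/-- The sentence `Ψ(⌜θ⌝) ↔ θ`. -/
def diagBicond (Ψ : LA.Formula (Fin 1)) (θ : LA.Sentence) : LA.Sentence :=
  (Ψ.subst (fun _ => numeral Empty (godelCode θ))) ⇔ θ

/-- The term `t + 1` (successor). -/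
def succT {α : Type} {n : ℕ} (t : LA.Term (α ⊕ Fin n)) : LA.Term (α ⊕ Fin n) :=
  Functions.apply₂ (L := LA) ArithFunc.add t (Constants.term ArithFunc.one)

/-- The term `0`. -/
def zeroT {α : Type} {n : ℕ} : LA.Term (α ⊕ Fin n) := Constants.term (L := LA) ArithFunc.zero

/-- The term `t + s`. -/
def addT {α : Type} {n : ℕ} (t s : LA.Term (α ⊕ Fin n)) : LA.Term (α ⊕ Fin n) :=
  Functions.apply₂ (L := LA) ArithFunc.add t s

/-- The term `t * s`. -/
def mulT {α : Type} {n : ℕ} (t s : LA.Term (α ⊕ Fin n)) : LA.Term (α ⊕ Fin n) :=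
  Functions.apply₂ (L := LA) ArithFunc.mul t s

/-- The atomic formula `t < s`. -/
def ltF {α : Type} {n : ℕ} (t s : LA.Term (α ⊕ Fin n)) : LA.BoundedFormula α n :=
  Relations.boundedFormula₂ (L := LA) ArithRel.lt t s

/-- Robinson's arithmetic Q. -/
def Q : LA.Theory :=
  { ∀' ∼(succT &0 =' zeroT),
    ∀' ∀' (succT &0 =' succT &1 ⟹ &0 =' &1),
    ∀' (∼(&0 =' zeroT) ⟹ ∃' (&0 =' succT &1)),
    ∀' (addT &0 zeroT =' &0),
    ∀' ∀' (addT &0 (succT &1) =' succT (addT &0 &1)),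
    ∀' (mulT &0 zeroT =' zeroT),
    ∀' ∀' (mulT &0 (succT &1) =' addT (mulT &0 &1) &0),
    ∀' ∀' (ltF &0 &1 ⇔ ∃' (addT &0 (succT &2) =' &1)) }

/-- A theory is recursively enumerable iff its set of Gödel codes is the domain
of a partial recursive function. -/
def RETheory (T : LA.Theory) : Prop :=
  ∃ f : ℕ →. Unit, Partrec f ∧ ∀ φ : LA.Sentence, φ ∈ T ↔ (f (godelCode φ)).Dom

/-!
Both provability and refutability in `T` are recursively enumerable, and since `T` is consistent no
sentence has both properties. Rosser's trick therefore yields a formula `Ψ(x)` which, in every model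
of Robinson's arithmetic, is true of the codes of the refutable sentences and false of the codes of
the provable ones. If `Ψ(⌜θ⌝) ↔ θ` holds in some model of `T`, then `θ` is independent: were `θ`
provable, `Ψ(⌜θ⌝)` would be both false and equivalent to a true sentence there; were `θ` refutable,
`Ψ(⌜θ⌝)` would be both true and equivalent to a false one.

`T ⊨ᵇ θ` is a semantic notion here, so its recursive enumerability is a form of the completeness
theorem. It is obtained from effective compactness of propositional logic: a theory is satisfiable
if and only if a primitive recursive list of clauses, expressing that a valuation of the sentences
with Henkin constants comes from a structure, has a model.
-/

/-! ### Models of Robinson's arithmetic -/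

namespace LA

variable {M : Type*} [LA.Structure M]

scoped instance (priority := low) : Zero M := ⟨Structure.funMap (L := LA) ArithFunc.zero ![]⟩

scoped instance (priority := low) : One M := ⟨Structure.funMap (L := LA) ArithFunc.one ![]⟩

scoped instance (priority := low) : Add M :=
  ⟨fun a b => Structure.funMap (L := LA) ArithFunc.add ![a, b]⟩

scoped instance (priority := low) : Mul M :=
  ⟨fun a b => Structure.funMap (L := LA) ArithFunc.mul ![a, b]⟩

scoped instance (priority := low) : LT M :=
  ⟨fun a b => Structure.RelMap (L := LA) ArithRel.lt ![a, b]⟩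

scoped instance (priority := low) : NatCast M := ⟨Nat.unaryCast⟩

end LA

open scoped LA

section Realize

variable {M α : Type*} [LA.Structure M] (v : α → M)

theorem realize_zero :
    (Constants.term (L := LA) ArithFunc.zero : LA.Term α).realize v = (0 : M) :=
  congrArg (Structure.funMap (L := LA) (M := M) ArithFunc.zero) (Subsingleton.elim _ _)

theorem realize_one : (Constants.term (L := LA) ArithFunc.one : LA.Term α).realize v = (1 : M) :=
  congrArg (Structure.funMap (L := LA) (M := M) ArithFunc.one) (Subsingleton.elim _ _)

theorem realize_add (t s : LA.Term α) :
    (Functions.apply₂ (L := LA) ArithFunc.add t s).realize v = t.realize v + s.realize v :=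
  Term.realize_functions_apply₂

theorem realize_mul (t s : LA.Term α) :
    (Functions.apply₂ (L := LA) ArithFunc.mul t s).realize v = t.realize v * s.realize v :=
  Term.realize_functions_apply₂

end Realize

namespace Q

variable {M : Type*} [LA.Structure M]

theorem laws_of_model (hM : M ⊨ Q) :
    (∀ x : M, x + 1 ≠ 0) ∧ (∀ x y : M, x + 1 = y + 1 → x = y) ∧
    (∀ x : M, x ≠ 0 → ∃ y, x = y + 1) ∧ (∀ x : M, x + 0 = x) ∧
    (∀ x y : M, x + (y + 1) = x + y + 1) ∧ (∀ x : M, x * 0 = 0) ∧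
    ∀ x y : M, x * (y + 1) = x * y + x := by
  have h := hM.realize_of_mem
  simp only [Q, Set.mem_insert_iff, Set.mem_singleton_iff, forall_eq_or_imp, forall_eq,
    Sentence.Realize, Formula.Realize, succT, zeroT, addT, mulT, BoundedFormula.realize_all,
    BoundedFormula.realize_not, BoundedFormula.realize_bdEqual, BoundedFormula.realize_imp,
    BoundedFormula.realize_ex, realize_add, realize_mul, realize_zero, realize_one] at h
  obtain ⟨h₁, h₂, h₃, h₄, h₅, h₆, h₇, -⟩ := h
  exact ⟨h₁, h₂, h₃, h₄, h₅, h₆, h₇⟩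

variable [hM : M ⊨ Q]

theorem succ_ne_zero (x : M) : x + 1 ≠ 0 := (laws_of_model hM).1 x

theorem succ_inj {x y : M} (h : x + 1 = y + 1) : x = y := (laws_of_model hM).2.1 x y h

theorem eq_zero_or_eq_succ (x : M) : x = 0 ∨ ∃ y, x = y + 1 :=
  or_iff_not_imp_left.2 ((laws_of_model hM).2.2.1 x)

theorem add_zero (x : M) : x + 0 = x := (laws_of_model hM).2.2.2.1 x

theorem add_succ (x y : M) : x + (y + 1) = x + y + 1 := (laws_of_model hM).2.2.2.2.1 x y

theorem mul_zero (x : M) : x * 0 = 0 := (laws_of_model hM).2.2.2.2.2.1 x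

theorem mul_succ (x y : M) : x * (y + 1) = x * y + x := (laws_of_model hM).2.2.2.2.2.2 x y

theorem zero_add_one : (0 + 1 : M) = 1 := by
  rcases eq_zero_or_eq_succ (1 : M) with h | ⟨y, hy⟩
  · exact absurd (h ▸ add_zero (0 : M)) (h ▸ succ_ne_zero (0 : M))
  rcases eq_zero_or_eq_succ y with rfl | ⟨z, rfl⟩
  · exact hy.symm
  have h : (0 + 1 : M) = 0 + (z + 1) + 1 := by rw [← add_succ, ← hy]
  exact absurd (succ_inj h).symm (by rw [add_succ]; exact succ_ne_zero _)

theorem cast_one : ((1 : ℕ) : M) = 1 := zero_add_one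

theorem cast_add (a b : ℕ) : ((a + b : ℕ) : M) = a + b := by
  induction b with
  | zero => exact (add_zero _).symm
  | succ b ih => exact (congrArg (· + 1) ih).trans (add_succ _ _).symm

theorem cast_mul (a b : ℕ) : ((a * b : ℕ) : M) = a * b := by
  induction b with
  | zero => exact (mul_zero _).symm
  | succ b ih => rw [Nat.mul_succ, cast_add, ih]; exact (mul_succ _ _).symm

theorem cast_injective : Function.Injective (Nat.cast : ℕ → M) := by
  intro a
  induction a with
  | zero =>
    rintro (_ | b) h
    · rfl
    · exact absurd h.symm (succ_ne_zero _)
  | succ a ih =>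
    rintro (_ | b) h
    · exact absurd h (succ_ne_zero _)
    · rw [ih (succ_inj h)]

theorem realize_numeral {α : Type} (v : α → M) : ∀ n, (numeral α n).realize v = n
  | 0 => realize_zero v
  | 1 => (realize_one v).trans cast_one.symm
  | n + 2 => by
    rw [numeral, realize_add, realize_one, realize_numeral v (n + 1), ← cast_one, ← cast_add,
      Nat.add_comm]

end Q

/-- The strict order on models of Robinson's arithmetic. The remainder is added on the left: only
then does every element become comparable with every standard number. -/
def QLt {M : Type*} [LA.Structure M] (x y : M) : Prop := ∃ z, z + 1 + x = y

namespace Q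

variable {M : Type*} [LA.Structure M] [M ⊨ Q]

theorem qLt_cast {a b : ℕ} (h : a < b) : QLt (a : M) b := by
  obtain ⟨c, rfl⟩ := Nat.exists_eq_add_of_lt h
  refine ⟨c, ?_⟩
  rw [← cast_one, ← cast_add, ← cast_add]
  congr 1
  omega

theorem exists_lt_of_qLt_cast {x : M} {b : ℕ} (h : QLt x b) : ∃ k < b, x = k := by
  induction b generalizing x with
  | zero =>
    obtain ⟨z, hz⟩ := h
    rcases eq_zero_or_eq_succ x with rfl | ⟨y, rfl⟩
    · exact absurd ((add_zero _).symm.trans hz) (succ_ne_zero _)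
    · exact absurd ((add_succ _ _).symm.trans hz) (succ_ne_zero _)
  | succ b ih =>
    rcases eq_zero_or_eq_succ x with rfl | ⟨y, rfl⟩
    · exact ⟨0, b.succ_pos, rfl⟩
    · obtain ⟨z, hz⟩ := h
      obtain ⟨k, hk, rfl⟩ := ih ⟨z, succ_inj ((add_succ _ _).symm.trans hz)⟩
      exact ⟨k + 1, Nat.succ_lt_succ hk, rfl⟩

theorem exists_le_or_cast_qLt (x : M) (b : ℕ) : (∃ k ≤ b, x = k) ∨ QLt (b : M) x := by
  induction b generalizing x with
  | zero =>
    rcases eq_zero_or_eq_succ x with rfl | ⟨y, rfl⟩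
    · exact .inl ⟨0, le_rfl, rfl⟩
    · exact .inr ⟨y, add_zero _⟩
  | succ b ih =>
    rcases eq_zero_or_eq_succ x with rfl | ⟨y, rfl⟩
    · exact .inl ⟨0, (b + 1).zero_le, rfl⟩
    rcases ih y with ⟨k, hk, rfl⟩ | ⟨z, rfl⟩
    · exact .inl ⟨k + 1, Nat.succ_le_succ hk, rfl⟩
    · exact .inr ⟨z, add_succ _ _⟩

end Q

/-! ### Binumerable and Σ₁ relations -/

/-- The assignment of values to the de Bruijn variables of a formula under one more binder. -/
def push {M : Type*} (x : M) (v : ℕ → M) : ℕ → M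
  | 0 => x
  | i + 1 => v i

theorem comp_push {M N : Type*} (f : M → N) (x : M) (v : ℕ → M) :
    (fun i => f (push x v i)) = push (f x) fun i => f (v i) := by
  funext i
  cases i <;> rfl

/-- The formula `∀ x₀, φ`, whose free variables `x₀, x₁, …` are the variables `x₁, x₂, …` of `φ`. -/
noncomputable def allZero (φ : LA.Formula ℕ) : LA.Formula ℕ :=
  Formula.iAlls Unit (φ.relabel (push (Sum.inr ()) Sum.inl))

/-- The formula `∃ x₀, φ`, with the same convention as `allZero`. -/
noncomputable def exZero (φ : LA.Formula ℕ) : LA.Formula ℕ := ∼(allZero ∼φ)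

/-- The formula `xᵢ < xⱼ` for the order `QLt`. -/
noncomputable def qLtVar (i j : ℕ) : LA.Formula ℕ :=
  exZero (Term.equal (Functions.apply₂ (L := LA) ArithFunc.add
    (Functions.apply₂ (L := LA) ArithFunc.add (Term.var 0)
      (Constants.term (L := LA) ArithFunc.one)) (Term.var (i + 1))) (Term.var (j + 1)))

section Realize

variable {M : Type*} [LA.Structure M] (v : ℕ → M)

theorem realize_allZero (φ : LA.Formula ℕ) :
    (allZero φ).Realize v ↔ ∀ x, φ.Realize (push x v) := by
  have h (i : Unit → M) :
      (fun a => Sum.elim v i a) ∘ push (Sum.inr ()) Sum.inl = push (i ()) v := by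
    funext k
    cases k <;> rfl
  simp only [allZero, Formula.realize_iAlls, Formula.realize_relabel, h]
  exact ⟨fun H x => H fun _ => x, fun H i => H (i ())⟩

theorem realize_exZero (φ : LA.Formula ℕ) :
    (exZero φ).Realize v ↔ ∃ x, φ.Realize (push x v) := by
  simp only [exZero, Formula.realize_not, realize_allZero, not_forall, not_not]

theorem realize_qLtVar (i j : ℕ) : (qLtVar i j).Realize v ↔ QLt (v i) (v j) := by
  simp only [qLtVar, realize_exZero, Formula.realize_equal, realize_add, realize_one,
    Term.realize_var]
  rfl

end Realize

/-- A function of an assignment is a *term function* if some term computes it on the standard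
numbers of every model of `Q`. -/
def IsTermFun (f : (ℕ → ℕ) → ℕ) : Prop :=
  ∃ t : LA.Term ℕ, ∀ (M : Type) [LA.Structure M] [M ⊨ Q] (v : ℕ → ℕ),
    t.realize (fun i => (v i : M)) = f v

namespace IsTermFun

variable {f g : (ℕ → ℕ) → ℕ}

theorem var (i : ℕ) : IsTermFun fun v => v i := ⟨Term.var i, fun _ _ _ _ => rfl⟩

theorem const (n : ℕ) : IsTermFun fun _ => n :=
  ⟨numeral ℕ n, fun _ _ _ _ => Q.realize_numeral _ n⟩

theorem add (hf : IsTermFun f) (hg : IsTermFun g) : IsTermFun fun v => f v + g v := by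
  obtain ⟨t, ht⟩ := hf
  obtain ⟨s, hs⟩ := hg
  exact ⟨Functions.apply₂ (L := LA) ArithFunc.add t s, fun M _ _ v => by
    rw [realize_add, ht M, hs M, Q.cast_add]⟩

theorem mul (hf : IsTermFun f) (hg : IsTermFun g) : IsTermFun fun v => f v * g v := by
  obtain ⟨t, ht⟩ := hf
  obtain ⟨s, hs⟩ := hg
  exact ⟨Functions.apply₂ (L := LA) ArithFunc.mul t s, fun M _ _ v => by
    rw [realize_mul, ht M, hs M, Q.cast_mul]⟩

end IsTermFun

/-- A relation between natural numbers, given as a predicate of assignments, is *binumerable* if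
some formula decides it on the standard numbers of every model of `Q`. -/
def IsBinumerable (R : (ℕ → ℕ) → Prop) : Prop :=
  ∃ φ : LA.Formula ℕ, ∀ (M : Type) [LA.Structure M] [M ⊨ Q] (v : ℕ → ℕ),
    φ.Realize (fun i => (v i : M)) ↔ R v

namespace IsBinumerable

variable {R S : (ℕ → ℕ) → Prop} {D : ℕ → (ℕ → ℕ) → Prop}

theorem of_iff (h : IsBinumerable R) (e : ∀ v, R v ↔ S v) : IsBinumerable S :=
  funext (fun v => propext (e v)) ▸ h

theorem eq {f g : (ℕ → ℕ) → ℕ} (hf : IsTermFun f) (hg : IsTermFun g) :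
    IsBinumerable fun v => f v = g v := by
  obtain ⟨t, ht⟩ := hf
  obtain ⟨s, hs⟩ := hg
  exact ⟨Term.equal t s, fun M _ _ v => by
    rw [Formula.realize_equal, ht M, hs M, Q.cast_injective.eq_iff]⟩

theorem not (h : IsBinumerable R) : IsBinumerable fun v => ¬ R v := by
  obtain ⟨φ, h⟩ := h
  exact ⟨∼φ, fun M _ _ v => by rw [Formula.realize_not, h M]⟩

theorem and (h : IsBinumerable R) (h' : IsBinumerable S) : IsBinumerable fun v => R v ∧ S v := by
  obtain ⟨φ, h⟩ := h
  obtain ⟨ψ, h'⟩ := h'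
  exact ⟨φ ⊓ ψ, fun M _ _ v => by rw [Formula.realize_inf, h M, h' M]⟩

theorem or (h : IsBinumerable R) (h' : IsBinumerable S) : IsBinumerable fun v => R v ∨ S v := by
  obtain ⟨φ, h⟩ := h
  obtain ⟨ψ, h'⟩ := h'
  exact ⟨φ ⊔ ψ, fun M _ _ v => by rw [Formula.realize_sup, h M, h' M]⟩

theorem reindex (h : IsBinumerable R) (σ : ℕ → ℕ) : IsBinumerable fun v => R fun i => v (σ i) := by
  obtain ⟨φ, h⟩ := h
  exact ⟨φ.relabel σ, fun M _ _ v => Formula.realize_relabel.trans (h M fun i => v (σ i))⟩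

theorem forall_lt (h : IsBinumerable fun v => D (v 0) fun i => v (i + 1)) (k : ℕ) :
    IsBinumerable fun v => ∀ x < v k, D x v := by
  obtain ⟨φ, h⟩ := h
  refine ⟨allZero ((qLtVar 0 (k + 1)).imp φ), fun M _ _ v => ?_⟩
  have hφ (x : ℕ) : φ.Realize (push (x : M) fun i => (v i : M)) ↔ D x v := by
    rw [← comp_push, h M]
    rfl
  simp only [realize_allZero, Formula.realize_imp, realize_qLtVar]
  constructor
  · exact fun H x hx => (hφ x).1 (H x (Q.qLt_cast hx))
  · intro H m hm
    obtain ⟨x, hx, rfl : m = x⟩ := Q.exists_lt_of_qLt_cast hm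
    exact (hφ x).2 (H x hx)

theorem exists_lt (h : IsBinumerable fun v => D (v 0) fun i => v (i + 1)) (k : ℕ) :
    IsBinumerable fun v => ∃ x < v k, D x v :=
  (h.not.forall_lt (D := fun x v => ¬ D x v) k).not.of_iff fun v => by push Not; rfl

theorem exists_lt_push (h : IsBinumerable fun v => D (v 0) fun i => v (i + 1)) :
    IsBinumerable fun v => ∃ y < v 1, D y (push (v 0) fun i => v (i + 2)) := by
  refine exists_lt ?_ 1
  have := h.reindex (push 0 (push 1 (· + 3)))
  exact this.of_iff fun v => iff_of_eq (congrArg (D (v 0)) (comp_push v 1 (· + 3)))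

theorem lt (i j : ℕ) : IsBinumerable fun v => v i < v j :=
  (exists_lt (D := fun x v => x = v i) (eq (.var 0) (.var (i + 1))) j).of_iff fun v => by simp

end IsBinumerable

/-- A relation is `Σ₁` if it is the projection of a binumerable relation. -/
def IsSigma₁ (R : (ℕ → ℕ) → Prop) : Prop :=
  ∃ D : ℕ → (ℕ → ℕ) → Prop, IsBinumerable (fun v => D (v 0) fun i => v (i + 1)) ∧
    ∀ v, R v ↔ ∃ y, D y v

/-- A function of an assignment is `Σ₁` if its graph is. -/
def IsSigma₁Fun (f : (ℕ → ℕ) → ℕ) : Prop :=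
  IsSigma₁ fun v => v 0 = f fun i => v (i + 1)

theorem IsBinumerable.isSigma₁ {R : (ℕ → ℕ) → Prop} (h : IsBinumerable R) : IsSigma₁ R :=
  ⟨fun _ v => R v, h.reindex _, fun _ => exists_const ℕ |>.symm⟩

theorem IsTermFun.isSigma₁Fun {f : (ℕ → ℕ) → ℕ} (h : IsTermFun f) : IsSigma₁Fun f := by
  obtain ⟨t, ht⟩ := h
  refine (IsBinumerable.eq (.var 0) ⟨t.relabel (· + 1), fun M _ _ v => ?_⟩).isSigma₁
  exact (Term.realize_relabel ..).trans (ht M fun i => v (i + 1))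

namespace IsSigma₁

variable {R S : (ℕ → ℕ) → Prop} {P : ℕ → (ℕ → ℕ) → Prop}

theorem of_iff (h : IsSigma₁ R) (e : ∀ v, R v ↔ S v) : IsSigma₁ S :=
  funext (fun v => propext (e v)) ▸ h

theorem reindex (h : IsSigma₁ R) (σ : ℕ → ℕ) : IsSigma₁ fun v => R fun i => v (σ i) := by
  obtain ⟨D, hD, h⟩ := h
  exact ⟨fun y v => D y fun i => v (σ i), hD.reindex (push 0 fun i => σ i + 1), fun v => h _⟩

theorem ex (h : IsSigma₁ fun v => P (v 0) fun i => v (i + 1)) : IsSigma₁ fun v => ∃ x, P x v := by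
  obtain ⟨D, hD, h⟩ := h
  refine ⟨fun w v => ∃ x < w, ∃ y < w, D y (push x v), hD.exists_lt_push.exists_lt 0, fun v => ?_⟩
  constructor
  · rintro ⟨x, hx⟩
    obtain ⟨y, hy⟩ := (h (push x v)).1 hx
    exact ⟨max x y + 1, x, by omega, y, by omega, hy⟩
  · rintro ⟨-, x, -, y, -, hy⟩
    exact ⟨x, (h (push x v)).2 ⟨y, hy⟩⟩

theorem forall_lt_var (h : IsSigma₁ fun v => P (v 0) fun i => v (i + 1)) (k : ℕ) :
    IsSigma₁ fun v => ∀ x < v k, P x v := by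
  obtain ⟨D, hD, h⟩ := h
  refine ⟨fun w v => ∀ x < v k, ∃ y < w, D y (push x v), hD.exists_lt_push.forall_lt (k + 1),
    fun v => ⟨fun H => ?_, fun ⟨w, H⟩ x hx => ?_⟩⟩
  · choose! y hy using fun x hx => (h (push x v)).1 (H x hx)
    exact ⟨(Finset.range (v k)).sup y + 1, fun x hx =>
      ⟨y x, Nat.lt_succ_of_le (Finset.le_sup (Finset.mem_range.2 hx)), hy x hx⟩⟩
  · obtain ⟨y, -, hy⟩ := H x hx
    exact (h (push x v)).2 ⟨y, hy⟩

theorem and (h : IsSigma₁ R) (h' : IsSigma₁ S) : IsSigma₁ fun v => R v ∧ S v := by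
  obtain ⟨D, hD, hR⟩ := h
  obtain ⟨E, hE, hS⟩ := h'
  have hDE : IsSigma₁ fun v => ∃ x y, D x v ∧ E y v :=
    ex (ex ((hD.reindex (push 1 (· + 2))).and (hE.reindex (push 0 (· + 2)))).isSigma₁)
  refine hDE.of_iff fun v => ?_
  simp only [hR, hS, exists_and_left, exists_and_right]

end IsSigma₁

section Substitution

variable {f g : (ℕ → ℕ) → ℕ} {P : ℕ → (ℕ → ℕ) → Prop}

theorem IsSigma₁Fun.reindex (h : IsSigma₁Fun f) (σ : ℕ → ℕ) :
    IsSigma₁Fun fun v => f fun i => v (σ i) :=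
  IsSigma₁.reindex h (push 0 fun i => σ i + 1)

theorem IsSigma₁.subst (h : IsSigma₁ fun v => P (v 0) fun i => v (i + 1)) (hf : IsSigma₁Fun f) :
    IsSigma₁ fun v => P (f v) v :=
  (IsSigma₁.ex (P := fun x v => x = f v ∧ P x v) (hf.and h)).of_iff fun _ => exists_eq_left

theorem IsSigma₁.subst₂ {P : ℕ → ℕ → (ℕ → ℕ) → Prop}
    (h : IsSigma₁ fun v => P (v 0) (v 1) fun i => v (i + 2)) (hf : IsSigma₁Fun f)
    (hg : IsSigma₁Fun g) : IsSigma₁ fun v => P (f v) (g v) v :=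
  subst (P := fun y v => P (f v) y v)
    (subst (P := fun x v => P x (v 0) fun i => v (i + 1)) h (hf.reindex (· + 1))) hg

theorem IsSigma₁.eq (hf : IsSigma₁Fun f) (hg : IsSigma₁Fun g) : IsSigma₁ fun v => f v = g v :=
  subst (P := fun x v => x = g v) hg hf

theorem IsSigma₁.forall_lt (h : IsSigma₁ fun v => P (v 0) fun i => v (i + 1))
    (hf : IsSigma₁Fun f) : IsSigma₁ fun v => ∀ x < f v, P x v :=
  subst (P := fun k v => ∀ x < k, P x v)
    (forall_lt_var (P := fun x v => P x fun i => v (i + 1)) (h.reindex (push 0 (· + 2))) 0) hf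

namespace IsSigma₁Fun

theorem comp {F : ℕ → ℕ} (hF : IsSigma₁Fun fun v => F (v 0)) (hf : IsSigma₁Fun f) :
    IsSigma₁Fun fun v => F (f v) :=
  IsSigma₁.subst (P := fun x v => v 0 = F x) (IsSigma₁.reindex hF (push 1 fun _ => 0))
    (hf.reindex (· + 1))

theorem comp₂ {F : ℕ → ℕ → ℕ} (hF : IsSigma₁Fun fun v => F (v 0) (v 1)) (hf : IsSigma₁Fun f)
    (hg : IsSigma₁Fun g) : IsSigma₁Fun fun v => F (f v) (g v) :=
  IsSigma₁.subst₂ (P := fun x y v => v 0 = F x y) (IsSigma₁.reindex hF (push 2 (push 0 fun _ => 1)))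
    (hf.reindex (· + 1)) (hg.reindex (· + 1))

theorem var (i : ℕ) : IsSigma₁Fun fun v => v i := (IsTermFun.var i).isSigma₁Fun

theorem const (n : ℕ) : IsSigma₁Fun fun _ => n := (IsTermFun.const n).isSigma₁Fun

theorem succ (hf : IsSigma₁Fun f) : IsSigma₁Fun fun v => f v + 1 :=
  comp (F := (· + 1)) ((IsTermFun.var 0).add (.const 1)).isSigma₁Fun hf

theorem pair (hf : IsSigma₁Fun f) (hg : IsSigma₁Fun g) :
    IsSigma₁Fun fun v => Nat.pair (f v) (g v) := by
  refine comp₂ (F := Nat.pair) ?_ hf hg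
  have h := ((IsBinumerable.lt 1 2).and (.eq (.var 0) (((IsTermFun.var 2).mul (.var 2)).add
      (.var 1)))).or ((IsBinumerable.lt 1 2).not.and (.eq (.var 0)
        ((((IsTermFun.var 1).mul (.var 1)).add (.var 1)).add (.var 2))))
  refine h.isSigma₁.of_iff fun v => ?_
  change _ ↔ v 0 = if v 1 < v 2 then _ else _
  split_ifs with hlt <;> simp [hlt]

theorem unpair_fst (hf : IsSigma₁Fun f) : IsSigma₁Fun fun v => (f v).unpair.1 := by
  refine comp (F := fun n => n.unpair.1) ?_ hf
  have h : IsSigma₁ fun v => ∃ b, v 1 = Nat.pair (v 0) b :=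
    IsSigma₁.ex (.eq (.var 2) (pair (.var 1) (.var 0)))
  refine h.of_iff fun v => ⟨fun ⟨b, hb⟩ => by simp [hb], fun hv => ?_⟩
  exact ⟨(v 1).unpair.2, by rw [hv, Nat.pair_unpair]⟩

theorem unpair_snd (hf : IsSigma₁Fun f) : IsSigma₁Fun fun v => (f v).unpair.2 := by
  refine comp (F := fun n => n.unpair.2) ?_ hf
  have h : IsSigma₁ fun v => ∃ a, v 1 = Nat.pair a (v 0) :=
    IsSigma₁.ex (.eq (.var 2) (pair (.var 0) (.var 1)))
  refine h.of_iff fun v => ⟨fun ⟨b, hb⟩ => by simp [hb], fun hv => ?_⟩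
  exact ⟨(v 1).unpair.1, by rw [hv, Nat.pair_unpair]⟩

theorem mod_succ (hf : IsSigma₁Fun f) (hg : IsSigma₁Fun g) :
    IsSigma₁Fun fun v => f v % (g v + 1) := by
  refine comp₂ (F := fun a b => a % (b + 1)) ?_ hf hg
  have h : IsSigma₁ fun v => ∃ q r, v 1 = (v 2 + 1) * q + v 0 ∧ v 2 = v 0 + r :=
    .ex (.ex ((IsBinumerable.eq (.var 3) ((((IsTermFun.var 4).add (.const 1)).mul (.var 1)).add
      (.var 2))).and (.eq (.var 4) ((IsTermFun.var 2).add (.var 0)))).isSigma₁)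
  refine h.of_iff fun v => ?_
  change _ ↔ v 0 = v 1 % (v 2 + 1)
  constructor
  · rintro ⟨q, r, h₁, h₂⟩
    rw [h₁, Nat.mul_add_mod, Nat.mod_eq_of_lt (by omega)]
  · intro hv
    have : v 1 % (v 2 + 1) < v 2 + 1 := Nat.mod_lt _ (v 2).succ_pos
    exact ⟨v 1 / (v 2 + 1), v 2 - v 0, by rw [hv, Nat.div_add_mod], by omega⟩

theorem beta (hf : IsSigma₁Fun f) (hg : IsSigma₁Fun g) :
    IsSigma₁Fun fun v => Nat.beta (f v) (g v) := by
  refine comp₂ (F := Nat.beta) ?_ hf hg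
  have h : IsSigma₁Fun fun v => (v 0 + 1) * v 1 :=
    (((IsTermFun.var 0).add (.const 1)).mul (.var 1)).isSigma₁Fun
  exact (unpair_fst (.var 0)).mod_succ
    (comp₂ (F := fun i b => (i + 1) * b) h (.var 1) (unpair_snd (.var 0)))

end IsSigma₁Fun

end Substitution

/-! ### Recursively enumerable relations are Σ₁ -/

theorem exists_beta_eq (s : ℕ → ℕ) (n : ℕ) : ∃ c, ∀ i ≤ n, Nat.beta c i = s i := by
  refine ⟨Nat.unbeta ((List.range (n + 1)).map s), fun i hi => ?_⟩
  have h := Nat.beta_unbeta_coe ((List.range (n + 1)).map s) ⟨i, by simpa using by omega⟩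
  simpa using h

theorem mem_rec_iff {α : Type*} (p : Part α) (q : ℕ → α → Part α) (n : ℕ) (y : α) :
    y ∈ (n.rec p fun i z => z.bind (q i) : Part α) ↔
      ∃ s : ℕ → α, s 0 ∈ p ∧ (∀ i < n, s (i + 1) ∈ q i (s i)) ∧ y = s n := by
  induction n generalizing y with
  | zero =>
    exact ⟨fun h => ⟨fun _ => y, h, by simp, rfl⟩, fun ⟨_, h, _, hy⟩ => hy ▸ h⟩
  | succ n ih =>
    simp only [Part.mem_bind_iff]
    constructor
    · rintro ⟨z, hz, hy⟩
      obtain ⟨s, h₀, h₁, rfl⟩ := (ih z).1 hz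
      refine ⟨fun i => if i ≤ n then s i else y, by simpa using h₀, fun i hi => ?_, by simp⟩
      rcases Nat.lt_succ_iff_lt_or_eq.1 hi with hi | rfl
      · simpa [Nat.succ_le_of_lt hi, hi.le] using h₁ i hi
      · simpa using hy
    · rintro ⟨s, h₀, h₁, rfl⟩
      exact ⟨s n, (ih _).2 ⟨s, h₀, fun i hi => h₁ i (by omega), rfl⟩, h₁ n n.lt_succ_self⟩

/-- A partial function on `ℕ` is `Σ₁` if its graph is. -/
def IsSigma₁PFun (f : ℕ →. ℕ) : Prop := IsSigma₁ fun v => v 0 ∈ f (v 1)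

namespace IsSigma₁PFun

variable {f g : ℕ →. ℕ}

theorem mem {a b : (ℕ → ℕ) → ℕ} (hf : IsSigma₁PFun f) (hb : IsSigma₁Fun b) (ha : IsSigma₁Fun a) :
    IsSigma₁ fun v => b v ∈ f (a v) :=
  IsSigma₁.subst₂ (P := fun y x _ => y ∈ f x) hf hb ha

theorem of_isSigma₁Fun {F : ℕ → ℕ} (h : IsSigma₁Fun fun v => F (v 0)) :
    IsSigma₁PFun (F : ℕ →. ℕ) :=
  IsSigma₁.of_iff h fun _ => Part.mem_some_iff.symm

theorem pair (hf : IsSigma₁PFun f) (hg : IsSigma₁PFun g) :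
    IsSigma₁PFun fun n => Nat.pair <$> f n <*> g n := by
  have h : IsSigma₁ fun v => ∃ a b, (a ∈ f (v 1) ∧ b ∈ g (v 1)) ∧ v 0 = Nat.pair a b :=
    .ex (.ex (((hf.mem (.var 1) (.var 3)).and (hg.mem (.var 0) (.var 3))).and
      (.eq (.var 2) (.pair (.var 1) (.var 0)))))
  refine h.of_iff fun v => ?_
  simp [Seq.seq, and_assoc, eq_comm]

theorem comp (hf : IsSigma₁PFun f) (hg : IsSigma₁PFun g) : IsSigma₁PFun fun n => g n >>= f := by
  have h : IsSigma₁ fun v => ∃ y, y ∈ g (v 1) ∧ v 0 ∈ f y :=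
    .ex ((hg.mem (.var 0) (.var 2)).and (hf.mem (.var 1) (.var 0)))
  exact h.of_iff fun v => Part.mem_bind_iff.symm

theorem rfind (hf : IsSigma₁PFun f) :
    IsSigma₁PFun fun a => Nat.rfind fun n => (fun m => m = 0) <$> f (Nat.pair a n) := by
  have h : IsSigma₁ fun v => 0 ∈ f (Nat.pair (v 1) (v 0)) ∧
      ∀ i < v 0, ∃ k, k + 1 ∈ f (Nat.pair (v 1) i) :=
    (hf.mem (.const 0) (.pair (.var 1) (.var 0))).and (.forall_lt (.ex
      (hf.mem (.succ (.var 0)) (.pair (.var 3) (.var 1)))) (.var 0))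
  refine h.of_iff fun v => Iff.trans ?_ Nat.mem_rfind.symm
  refine and_congr (by simp) (forall₂_congr fun i _ => ?_)
  simp only [Part.map_eq_map, Part.mem_map_iff, decide_eq_false_iff_not]
  refine ⟨fun ⟨k, hk⟩ => ⟨k + 1, hk, k.succ_ne_zero⟩, fun ⟨m, hm, hm₀⟩ => ?_⟩
  exact ⟨m - 1, by rwa [Nat.sub_add_cancel (Nat.pos_of_ne_zero hm₀)]⟩

theorem prec (hf : IsSigma₁PFun f) (hg : IsSigma₁PFun g) :
    IsSigma₁PFun (Nat.unpaired fun a n =>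
      n.rec (f a) fun y IH => do let i ← IH; g (Nat.pair a (Nat.pair y i))) := by
  have h : IsSigma₁ fun v => ∃ c, Nat.beta c 0 ∈ f (v 1).unpair.1 ∧
      (∀ i < (v 1).unpair.2, Nat.beta c (i + 1) ∈
        g (Nat.pair (v 1).unpair.1 (Nat.pair i (Nat.beta c i)))) ∧
      v 0 = Nat.beta c (v 1).unpair.2 := by
    refine .ex (.and ?_ (.and (.forall_lt ?_ ?_) ?_))
    · exact hf.mem (.beta (.var 0) (.const 0)) (.unpair_fst (.var 2))
    · exact hg.mem (.beta (.var 1) (.succ (.var 0)))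
        (.pair (.unpair_fst (.var 3)) (.pair (.var 0) (.beta (.var 1) (.var 0))))
    · exact .unpair_snd (.var 2)
    · exact .eq (.var 1) (.beta (.var 0) (.unpair_snd (.var 2)))
  refine h.of_iff fun v => Iff.trans ?_ (mem_rec_iff _ _ _ _).symm
  constructor
  · rintro ⟨c, h₀, h₁, hy⟩
    exact ⟨Nat.beta c, h₀, h₁, hy⟩
  · rintro ⟨s, h₀, h₁, hy⟩
    obtain ⟨c, hc⟩ := exists_beta_eq s (v 1).unpair.2
    refine ⟨c, by rwa [hc _ (Nat.zero_le _)], fun i hi => ?_, by rw [hc _ le_rfl, hy]⟩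
    rw [hc _ hi, hc _ hi.le]
    exact h₁ i hi

theorem of_partrec (hf : Nat.Partrec f) : IsSigma₁PFun f := by
  induction hf with
  | zero => exact of_isSigma₁Fun (F := fun _ => 0) (.const 0)
  | succ => exact of_isSigma₁Fun (.succ (.var 0))
  | left => exact of_isSigma₁Fun (.unpair_fst (.var 0))
  | right => exact of_isSigma₁Fun (.unpair_snd (.var 0))
  | pair _ _ hf hg => exact hf.pair hg
  | comp _ _ hf hg => exact hf.comp hg
  | prec _ _ hf hg => exact hf.prec hg
  | rfind _ hf => exact hf.rfind

end IsSigma₁PFun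

theorem IsSigma₁.of_rePred {p : ℕ → Prop} (hp : REPred p) : IsSigma₁ fun v => p (v 0) :=
  ((IsSigma₁PFun.of_partrec hp).mem (.const 0) (.var 0)).of_iff fun v => by
    simpa [Part.mem_assert_iff] using fun _ => ⟨(), rfl⟩

/-! ### Rosser formulas -/

/-- The formula `∃ y, D(y, x₀) ∧ ∀ z < y, ¬ E(z, x₀)`. -/
noncomputable def rosserFormula (δ ε : LA.Formula ℕ) : LA.Formula (Fin 1) :=
  (exZero (δ ⊓ allZero ((qLtVar 0 1).imp ∼(ε.relabel (push 0 (· + 2)))))).relabel fun _ => 0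

theorem realize_rosserFormula {M : Type*} [LA.Structure M] (δ ε : LA.Formula ℕ) (x : M) :
    (rosserFormula δ ε).Realize (fun _ => x) ↔ ∃ y, δ.Realize (push y fun _ => x) ∧
      ∀ z, QLt z y → ¬ ε.Realize (push z fun _ => x) := by
  simp only [rosserFormula, Formula.realize_relabel, realize_exZero, realize_allZero,
    Formula.realize_inf, Formula.realize_imp, Formula.realize_not, realize_qLtVar]
  have h (y z : M) : push z (push y fun _ => x) ∘ push 0 (· + 2) = push z fun _ => x :=
    comp_push (push z (push y fun _ => x)) 0 (· + 2)
  simp only [Function.comp_def] at h ⊢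
  simp only [h]
  rfl

theorem exists_formula_separating {A B : ℕ → Prop} (hA : REPred A) (hB : REPred B)
    (hAB : ∀ n, A n → ¬ B n) :
    ∃ Ψ : LA.Formula (Fin 1), ∀ (M : Type) [LA.Structure M] [M ⊨ Q] (n : ℕ),
      (A n → Ψ.Realize fun _ => (n : M)) ∧ (B n → ¬ Ψ.Realize fun _ => (n : M)) := by
  obtain ⟨D, ⟨δ, hδ⟩, hD⟩ := IsSigma₁.of_rePred hA
  obtain ⟨E, ⟨ε, hε⟩, hE⟩ := IsSigma₁.of_rePred hB
  refine ⟨rosserFormula δ ε, fun M _ _ n => ?_⟩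
  have hδ' (y : ℕ) : δ.Realize (push (y : M) fun _ => (n : M)) ↔ D y fun _ => n :=
    (comp_push (Nat.cast : ℕ → M) y fun _ => n) ▸ hδ M (push y fun _ => n)
  have hε' (y : ℕ) : ε.Realize (push (y : M) fun _ => (n : M)) ↔ E y fun _ => n :=
    (comp_push (Nat.cast : ℕ → M) y fun _ => n) ▸ hε M (push y fun _ => n)
  simp only [realize_rosserFormula]
  constructor
  · intro hn
    obtain ⟨y, hy⟩ := (hD fun _ => n).1 hn
    refine ⟨y, (hδ' y).2 hy, fun z hz hεz => ?_⟩
    obtain ⟨k, -, rfl⟩ := Q.exists_lt_of_qLt_cast hz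
    exact hAB n hn ((hE fun _ => n).2 ⟨k, (hε' k).1 hεz⟩)
  · rintro hn ⟨y, hy, hz⟩
    obtain ⟨b, hb⟩ := (hE fun _ => n).1 hn
    rcases Q.exists_le_or_cast_qLt y b with ⟨k, -, rfl⟩ | hby
    · exact hAB n ((hD fun _ => n).2 ⟨k, (hδ' k).1 hy⟩) hn
    · exact hz b hby ((hε' b).2 hb)

/-! ### Primitive recursion and recursive enumerability -/

attribute [fun_prop] Primrec Primrec.const Primrec.comp Primrec.pair Primrec.fst Primrec.snd
  Primrec.encode Primrec.ofNat Primrec.unpair Primrec.sumInl Primrec.sumInr Primrec.list_range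

section Primrec

variable {α β γ : Type*} [Primcodable α] [Primcodable β] [Primcodable γ]

@[fun_prop]
theorem primrec_id : Primrec fun a : α => a := Primrec.id

@[fun_prop]
theorem primrec_add {f g : α → ℕ} (hf : Primrec f) (hg : Primrec g) :
    Primrec fun a => f a + g a :=
  Primrec.nat_add.comp hf hg

@[fun_prop]
theorem primrec_sub {f g : α → ℕ} (hf : Primrec f) (hg : Primrec g) :
    Primrec fun a => f a - g a :=
  Primrec.nat_sub.comp hf hg

@[fun_prop]
theorem primrec_mul {f g : α → ℕ} (hf : Primrec f) (hg : Primrec g) :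
    Primrec fun a => f a * g a :=
  Primrec.nat_mul.comp hf hg

@[fun_prop]
theorem primrec_div {f g : α → ℕ} (hf : Primrec f) (hg : Primrec g) :
    Primrec fun a => f a / g a :=
  Primrec.nat_div.comp hf hg

@[fun_prop]
theorem primrec_mod {f g : α → ℕ} (hf : Primrec f) (hg : Primrec g) :
    Primrec fun a => f a % g a :=
  Primrec.nat_mod.comp hf hg

@[fun_prop]
theorem primrec_pow {f g : α → ℕ} (hf : Primrec f) (hg : Primrec g) :
    Primrec fun a => f a ^ g a :=
  (Primrec₂.unpaired'.1 Nat.Primrec.pow).comp hf hg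

@[fun_prop]
theorem primrec_natPair {f g : α → ℕ} (hf : Primrec f) (hg : Primrec g) :
    Primrec fun a => Nat.pair (f a) (g a) :=
  Primrec₂.natPair.comp hf hg

@[fun_prop]
theorem primrec_cons {f : α → β} {g : α → List β} (hf : Primrec f) (hg : Primrec g) :
    Primrec fun a => f a :: g a :=
  Primrec.list_cons.comp hf hg

@[fun_prop]
theorem primrec_append {f g : α → List β} (hf : Primrec f) (hg : Primrec g) :
    Primrec fun a => f a ++ g a :=
  Primrec.list_append.comp hf hg

@[fun_prop]
theorem primrec_getD {f : α → List β} {g : α → ℕ} {d : α → β} (hf : Primrec f) (hg : Primrec g)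
    (hd : Primrec d) : Primrec fun a => (f a).getD (g a) (d a) :=
  Primrec.option_getD.comp (Primrec.list_getElem?.comp hf hg) hd

theorem primrec_ite_eq [DecidableEq γ] {f g : α → γ} {h k : α → β} (hf : Primrec f)
    (hg : Primrec g) (hh : Primrec h) (hk : Primrec k) :
    Primrec fun a => if f a = g a then h a else k a :=
  .ite (Primrec.eq.comp hf hg) hh hk

@[fun_prop]
theorem primrec_ite_lt {f g : α → ℕ} {h k : α → β} (hf : Primrec f) (hg : Primrec g)
    (hh : Primrec h) (hk : Primrec k) : Primrec fun a => if f a < g a then h a else k a :=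
  .ite (Primrec.nat_lt.comp hf hg) hh hk

theorem primrecPred_testBit {f g : α → ℕ} (hf : Primrec f) (hg : Primrec g) :
    PrimrecPred fun a => (f a).testBit (g a) := by
  have h : PrimrecPred fun a => f a / 2 ^ g a % 2 = 1 :=
    Primrec.eq.comp (by fun_prop) (by fun_prop)
  exact h.of_eq fun a => by rw [Nat.testBit_eq_decide_div_mod_eq, decide_eq_true_iff]

theorem primrecRel_exists_lt {R : ℕ → α → Prop} (hR : PrimrecRel R) :
    PrimrecRel fun n a => ∃ k < n, R k a :=
  (hR.exists_mem_list.comp (f := fun p : ℕ × α => List.range p.1) (g := Prod.snd)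
    (by fun_prop) (by fun_prop)).of_eq (by simp)

theorem primrecRel_forall_lt {R : ℕ → α → Prop} (hR : PrimrecRel R) :
    PrimrecRel fun n a => ∀ k < n, R k a :=
  (hR.forall_mem_list.comp (f := fun p : ℕ × α => List.range p.1) (g := Prod.snd)
    (by fun_prop) (by fun_prop)).of_eq (by simp)

theorem rePred_exists {R : α → ℕ → Prop} (hR : PrimrecRel R) : REPred fun a => ∃ k, R a k := by
  classical
  have h : Computable₂ fun a k => decide (R a k) := hR.decide.to_comp
  refine (Partrec.rfind h.partrec₂).dom_re.of_eq fun a => Nat.rfind_dom.trans ⟨?_, ?_⟩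
  · rintro ⟨k, hk, -⟩
    exact ⟨k, of_decide_eq_true (Part.mem_some_iff.1 hk).symm⟩
  · rintro ⟨k, hk⟩
    exact ⟨k, Part.mem_some_iff.2 (decide_eq_true hk).symm, fun _ => trivial⟩

theorem exists_primrec_stage {f : ℕ →. Unit} (hf : Partrec f) :
    ∃ e : ℕ → ℕ → Bool, Primrec₂ e ∧ ∀ n, (f n).Dom ↔ ∃ k, e k n = true := by
  have hg : Nat.Partrec fun n => (f n).map fun _ => 0 :=
    Partrec.nat_iff.1 (hf.map (Computable.const 0).to₂)
  obtain ⟨c, hc⟩ := Nat.Partrec.Code.exists_code.1 hg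
  refine ⟨fun k n => (c.evaln k n).isSome, ?_, fun n => ?_⟩
  · refine Primrec.option_isSome.comp (Nat.Partrec.Code.primrec_evaln.comp
      (f := fun a : (ℕ × Nat.Partrec.Code) × ℕ => _) (g := fun q : ℕ × ℕ => ((q.1, c), q.2))
      (by fun_prop))
  · have h : (f n).Dom ↔ ∃ x, x ∈ c.eval n := by
      rw [hc, ← Part.dom_iff_mem]
      rfl
    simp only [h, Nat.Partrec.Code.evaln_complete, Option.isSome_iff_exists, Option.mem_def]
    exact exists_comm

theorem rePred_exists_eq {f : ℕ → ℕ} (hf : Primrec f) {p : ℕ → Prop} (hp : REPred p) :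
    REPred fun n => ∃ x, f x = n ∧ p x := by
  obtain ⟨e, he, hdom⟩ := exists_primrec_stage hp
  have hR : PrimrecRel fun n (q : ℕ) => f q.unpair.1 = n ∧ e q.unpair.2 q.unpair.1 = true :=
    (Primrec.eq.comp (by fun_prop) (by fun_prop)).and
      (Primrec.eq.comp (he.comp (by fun_prop) (by fun_prop)) (.const true))
  refine (rePred_exists hR).of_eq fun n => ?_
  have hp' (x : ℕ) : p x ↔ ∃ k, e k x = true := (by simp [Part.assert] : p x ↔ _).trans (hdom x)
  simp only [hp', ← exists_and_left]
  exact (Nat.surjective_unpair.exists (p := fun q => f q.1 = n ∧ e q.2 q.1 = true)).symm.trans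
    Prod.exists

end Primrec

/-! ### Effective compactness of propositional logic -/

/-- A propositional clause over the atoms `A`, written as a sequent: the conjunction of the atoms in
the first list implies the disjunction of those in the second. -/
abbrev Clause (A : Type*) := List A × List A

namespace Clause

variable {A : Type*}

/-- The clause holds under the valuation making exactly the atoms in `W` true. -/
def Holds (W : A → Prop) (C : Clause A) : Prop := (∀ a ∈ C.1, W a) → ∃ b ∈ C.2, W b

theorem exists_holds_of_forall_lt (S : ℕ → List (Clause A))
    (h : ∀ K, ∃ W : A → Prop, ∀ k < K, ∀ C ∈ S k, C.Holds W) :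
    ∃ W : A → Prop, ∀ k, ∀ C ∈ S k, C.Holds W := by
  choose V hV using h
  refine ⟨fun a => ∀ᶠ K in (Filter.hyperfilter ℕ : Filter ℕ), V K a, fun k C hC hW => ?_⟩
  have hall : ∀ᶠ K in (Filter.hyperfilter ℕ : Filter ℕ), ∀ a ∈ C.1, V K a :=
    (Filter.eventually_all_finite C.1.finite_toSet).2 hW
  have hk : ∀ᶠ K in (Filter.hyperfilter ℕ : Filter ℕ), k < K :=
    Nat.hyperfilter_le_atTop (Filter.eventually_gt_atTop k)
  refine (Ultrafilter.eventually_exists_mem_iff C.2.finite_toSet).1 ?_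
  filter_upwards [hall, hk] with K hK hkK using hV K k hkK C hC hK

variable [Encodable A]

/-- The clause fails under the valuation whose value at an atom is the binary digit of `s` at the
code of that atom, where only the first `N` digits of `s` are taken into account. -/
def FailsAt (N s : ℕ) (C : Clause A) : Prop :=
  (∀ a ∈ C.1, s.testBit (Encodable.encode a)) ∧
    ∀ b ∈ C.2, Encodable.encode b < N ∧ ¬ s.testBit (Encodable.encode b)

/-- The first `N` of the given sets of clauses are refuted by the truth table for the atoms with
code below `N`. -/
def RefutedAt (S : ℕ → List (Clause A)) (N : ℕ) : Prop :=
  ∀ s < 2 ^ N, ∃ k < N, ∃ C ∈ S k, C.FailsAt N s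

theorem RefutedAt.not_exists_holds {S : ℕ → List (Clause A)} {N : ℕ} (h : RefutedAt S N) :
    ¬ ∃ W : A → Prop, ∀ k, ∀ C ∈ S k, C.Holds W := by
  classical
  rintro ⟨W, hW⟩
  let s := Nat.ofBits fun i : Fin N => decide (∃ a, Encodable.encode a = i ∧ W a)
  have hs {a : A} (ha : Encodable.encode a < N) : s.testBit (Encodable.encode a) ↔ W a := by
    rw [Nat.testBit_ofBits_lt _ _ ha, decide_eq_true_iff]
    exact ⟨fun ⟨b, hb, hWb⟩ => Encodable.encode_injective hb ▸ hWb, fun hWa => ⟨a, rfl, hWa⟩⟩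
  obtain ⟨k, -, C, hC, hC₁, hC₂⟩ := h s (Nat.ofBits_lt_two_pow _)
  obtain ⟨b, hb, hWb⟩ := hW k C hC fun a ha => (hs (by
    by_contra hN
    exact absurd (hC₁ a ha) (by simp [s, Nat.testBit_ofBits_ge _ _ (not_lt.1 hN)]))).1 (hC₁ a ha)
  exact (hC₂ b hb).2 ((hs (hC₂ b hb).1).2 hWb)

theorem exists_encode_lt (S : ℕ → List (Clause A)) (K : ℕ) :
    ∃ N, K ≤ N ∧ ∀ k < K, ∀ C ∈ S k, ∀ b ∈ C.2, Encodable.encode b < N := by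
  obtain ⟨N, hN⟩ := ((Finset.range K).toList.flatMap fun k => (S k).flatMap fun C =>
    C.2.map Encodable.encode).toFinset.exists_nat_subset_range
  refine ⟨max K N, le_max_left .., fun k hk C hC b hb => lt_max_of_lt_right ?_⟩
  refine Finset.mem_range.1 (hN ?_)
  simp only [List.mem_toFinset, List.mem_flatMap, Finset.mem_toList, Finset.mem_range,
    List.mem_map]
  exact ⟨k, hk, C, hC, b, hb, rfl⟩

theorem exists_refutedAt_iff (S : ℕ → List (Clause A)) :
    (∃ N, RefutedAt S N) ↔ ¬ ∃ W : A → Prop, ∀ k, ∀ C ∈ S k, C.Holds W := by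
  refine ⟨fun ⟨_, hN⟩ => hN.not_exists_holds, fun h => ?_⟩
  obtain ⟨K, hK⟩ := not_forall.1 (mt (exists_holds_of_forall_lt S) h)
  obtain ⟨N, hKN, hN⟩ := exists_encode_lt S K
  refine ⟨N, fun s _ => ?_⟩
  have hs : ∃ k < K, ∃ C ∈ S k, ¬ C.Holds fun a : A => s.testBit (Encodable.encode a) := by
    by_contra! hs
    exact hK ⟨_, hs⟩
  obtain ⟨k, hk, C, hC, hCs⟩ := hs
  obtain ⟨hC₁, hC₂⟩ := Classical.not_imp.1 hCs
  exact ⟨k, hk.trans_le hKN, C, hC, hC₁,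
    fun b hb => ⟨hN k hk C hC b hb, fun hsb => hC₂ ⟨b, hb, hsb⟩⟩⟩

end Clause

section Primrec

variable {A σ : Type*} [Primcodable A] [Primcodable σ]

theorem Clause.primrecRel_failsAt :
    PrimrecRel fun (C : Clause A) (q : ℕ × ℕ) => C.FailsAt q.1 q.2 := by
  have hneg : PrimrecRel fun (a : A) (s : ℕ) => s.testBit (Encodable.encode a) :=
    primrecPred_testBit (by fun_prop) (by fun_prop)
  have hpos : PrimrecRel fun (b : A) (q : ℕ × ℕ) =>
      Encodable.encode b < q.1 ∧ ¬ q.2.testBit (Encodable.encode b) :=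
    (Primrec.nat_lt.comp (by fun_prop) (by fun_prop)).and
      (primrecPred_testBit (by fun_prop) (by fun_prop)).not
  exact (hneg.forall_mem_list.comp (by fun_prop) (by fun_prop)).and
    (hpos.forall_mem_list.comp (by fun_prop) (by fun_prop))

theorem Clause.primrecRel_refutedAt {S : σ → ℕ → List (Clause A)} (hS : Primrec₂ S) :
    PrimrecRel fun x N => RefutedAt (S x) N := by
  have hk : PrimrecRel fun (k : ℕ) (q : (σ × ℕ) × ℕ) => ∃ C ∈ S q.1.1 k, C.FailsAt q.1.2 q.2 :=
    primrecRel_failsAt.exists_mem_list.comp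
      (f := fun p : ℕ × (σ × ℕ) × ℕ => S p.2.1.1 p.1) (g := fun p => (p.2.1.2, p.2.2))
      (hS.comp (by fun_prop) (by fun_prop)) (by fun_prop)
  have hs : PrimrecRel fun (s : ℕ) (q : σ × ℕ) => ∃ k < q.2, ∃ C ∈ S q.1 k, C.FailsAt q.2 s :=
    (primrecRel_exists_lt hk).comp (f := fun p : ℕ × σ × ℕ => p.2.2) (g := fun p => (p.2, p.1))
      (by fun_prop) (by fun_prop)
  exact (primrecRel_forall_lt hs).comp (f := fun q : σ × ℕ => 2 ^ q.2) (g := fun q => q)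
    (by fun_prop) (by fun_prop)

theorem Clause.rePred_not_exists_holds {κ : Type*} [Primcodable κ] {S : σ → κ → List (Clause A)}
    (hS : Primrec₂ S) : REPred fun x => ¬ ∃ W : A → Prop, ∀ k, ∀ C ∈ S x k, C.Holds W := by
  let S' (x : σ) (n : ℕ) : List (Clause A) := ((Encodable.decode n).map (S x)).getD []
  have hS' : Primrec₂ S' := Primrec.option_getD.comp
    (Primrec.option_map (Primrec.decode.comp Primrec.snd)
      (hS.comp (Primrec.fst.comp Primrec.fst) Primrec.snd)) (.const [])
  refine (rePred_exists (primrecRel_refutedAt hS')).of_eq fun x =>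
    (exists_refutedAt_iff (S' x)).trans <| not_congr <| exists_congr fun W =>
      ⟨fun h k => ?_, fun h n => ?_⟩
  · simpa [S'] using h (Encodable.encode k)
  · cases hn : (Encodable.decode n : Option κ) with
    | none => simp [S', hn]
    | some k => simpa [S', hn] using h k

end Primrec

/-! ### Numerical codes of terms and formulas -/

/-- The code of the binary tree with root label `k` and subtrees coded by `a` and `b`; the empty
tree has code `0`. -/
def node (k a b : ℕ) : ℕ := Nat.pair k (Nat.pair a b) + 1

theorem left_lt_node (k a b : ℕ) : a < node k a b :=
  Nat.lt_succ_of_le ((Nat.left_le_pair a b).trans (Nat.right_le_pair k _))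

theorem right_lt_node (k a b : ℕ) : b < node k a b :=
  Nat.lt_succ_of_le ((Nat.right_le_pair a b).trans (Nat.right_le_pair k _))

theorem exists_eq_node {n : ℕ} (hn : n ≠ 0) : ∃ k a b, n = node k a b :=
  ⟨(n - 1).unpair.1, (n - 1).unpair.2.unpair.1, (n - 1).unpair.2.unpair.2, by
    simp only [node, Nat.pair_unpair]
    omega⟩

theorem node_induction {p : ℕ → Prop} (zero : p 0)
    (node : ∀ k a b, p a → p b → p (node k a b)) (n : ℕ) : p n := by
  induction n using Nat.strong_induction_on with
  | _ n ih =>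
    rcases eq_or_ne n 0 with rfl | hn
    · exact zero
    · obtain ⟨k, a, b, rfl⟩ := exists_eq_node hn
      exact node k a b (ih a (left_lt_node k a b)) (ih b (right_lt_node k a b))

/-- Recursion on the tree coded by a number. -/
def nodeRec {τ : Type*} (z : τ) (f : ℕ → ℕ → ℕ → τ → τ → τ) : ℕ → τ
  | 0 => z
  | n + 1 => f n.unpair.1 n.unpair.2.unpair.1 n.unpair.2.unpair.2
      (nodeRec z f n.unpair.2.unpair.1) (nodeRec z f n.unpair.2.unpair.2)
decreasing_by
  · exact Nat.lt_succ_of_le ((Nat.unpair_left_le _).trans (Nat.unpair_right_le _))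
  · exact Nat.lt_succ_of_le ((Nat.unpair_right_le _).trans (Nat.unpair_right_le _))

section NodeRec

variable {τ : Type*} (z : τ) (f : ℕ → ℕ → ℕ → τ → τ → τ)

theorem nodeRec_zero : nodeRec z f 0 = z := by rw [nodeRec]

theorem nodeRec_node (k a b : ℕ) :
    nodeRec z f (node k a b) = f k a b (nodeRec z f a) (nodeRec z f b) := by
  rw [node, nodeRec, Nat.unpair_pair, Nat.unpair_pair]

end NodeRec

@[fun_prop]
theorem primrec_node {α : Type*} [Primcodable α] {f g h : α → ℕ} (hf : Primrec f) (hg : Primrec g)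
    (hh : Primrec h) : Primrec fun x => node (f x) (g x) (h x) := by
  unfold node
  fun_prop

theorem primrec_ite_four {α β : Type*} [Primcodable α] [Primcodable β] {k : α → ℕ}
    {f₀ f₁ f₂ f₃ : α → β} (hk : Primrec k) (h₀ : Primrec f₀) (h₁ : Primrec f₁) (h₂ : Primrec f₂)
    (h₃ : Primrec f₃) :
    Primrec fun a => if k a = 0 then f₀ a else if k a = 1 then f₁ a
      else if k a = 2 then f₂ a else f₃ a :=
  primrec_ite_eq hk (.const 0) h₀
    (primrec_ite_eq hk (.const 1) h₁ (primrec_ite_eq hk (.const 2) h₂ h₃))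

theorem primrec_of_node {σ τ : Type*} [Primcodable σ] [Primcodable τ] {g : σ → ℕ → τ} {z : σ → τ}
    {u : ℕ → σ → σ} {f : σ × (ℕ × ℕ × ℕ) × τ × τ → τ} (hz : Primrec z) (hu : Primrec₂ u)
    (hf : Primrec f) (hzero : ∀ s, g s 0 = z s)
    (hnode : ∀ s k a b, g s (node k a b) = f (s, (k, a, b), g (u k s) a, g (u k s) b)) :
    Primrec₂ g := by
  let label (q : σ × ℕ) : ℕ × ℕ × ℕ :=
    ((q.2 - 1).unpair.1, (q.2 - 1).unpair.2.unpair.1, (q.2 - 1).unpair.2.unpair.2)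
  have label_node (s : σ) (k a b : ℕ) : label (s, node k a b) = (k, a, b) := by
    simp only [label, node, Nat.add_sub_cancel, Nat.unpair_pair]
  have hlabel : Primrec label := by fun_prop
  have hu' : Primrec fun q : σ × ℕ => u (label q).1 q.1 := hu.comp (by fun_prop) (by fun_prop)
  refine Primrec.nat_omega_rec' (fun q : σ × ℕ => g q.1 q.2) (m := fun q => q.2)
    (l := fun q => if q.2 = 0 then []
      else [(u (label q).1 q.1, (label q).2.1), (u (label q).1 q.1, (label q).2.2)])
    (g := fun q L => some (if q.2 = 0 then z q.1
      else f (q.1, label q, L.getD 0 (z q.1), L.getD 1 (z q.1))))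
    Primrec.snd (primrec_ite_eq (by fun_prop) (by fun_prop) (by fun_prop) ?_) ?_ ?_ ?_
  · exact primrec_cons (hu'.pair (by fun_prop))
      (primrec_cons (hu'.pair (by fun_prop)) (by fun_prop))
  · refine Primrec.option_some.comp (primrec_ite_eq (by fun_prop) (by fun_prop) (by fun_prop) ?_)
    exact hf.comp (by fun_prop)
  · rintro ⟨s, n⟩ q hq
    rcases eq_or_ne n 0 with rfl | hn
    · simp at hq
    obtain ⟨k, a, b, rfl⟩ := exists_eq_node hn
    simp only [hn, if_false, label_node, List.mem_cons, List.not_mem_nil, or_false] at hq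
    rcases hq with rfl | rfl
    exacts [left_lt_node k a b, right_lt_node k a b]
  · rintro ⟨s, n⟩
    rcases eq_or_ne n 0 with rfl | hn
    · simp [hzero]
    obtain ⟨k, a, b, rfl⟩ := exists_eq_node hn
    simp [hn, label_node, hnode]

section Codes

variable {n : ℕ}

/-- The term with variables among `&0, …, &(n - 1)` coded by a number. Every number codes a term:
variables out of range denote `0`. -/
def termOfCode (n : ℕ) : ℕ → LA.Term (Empty ⊕ Fin n) :=
  nodeRec zeroT fun k a _ t s =>
    match k with
    | 0 => if h : a < n then &⟨a, h⟩ else zeroT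
    | 1 => addT t s
    | 2 => mulT t s
    | _ => Constants.term ArithFunc.one

/-- The formula coded by a number, read with `n` free variables. -/
def formulaOfCode : ℕ → ∀ n, LA.BoundedFormula Empty n :=
  nodeRec (fun _ => ⊥) fun k a b φ ψ n =>
    match k with
    | 0 => termOfCode n a =' termOfCode n b
    | 1 => ltF (termOfCode n a) (termOfCode n b)
    | 2 => φ n ⟹ ψ n
    | _ => ∀' φ (n + 1)

theorem termOfCode_zero (n : ℕ) : termOfCode n 0 = zeroT :=
  nodeRec_zero ..

theorem termOfCode_var (i : Fin n) (b : ℕ) : termOfCode n (node 0 i b) = &i :=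
  (nodeRec_node ..).trans (dif_pos i.2)

theorem termOfCode_var_of_le {a : ℕ} (h : n ≤ a) (b : ℕ) : termOfCode n (node 0 a b) = zeroT :=
  (nodeRec_node ..).trans (dif_neg h.not_gt)

theorem termOfCode_add (a b : ℕ) :
    termOfCode n (node 1 a b) = addT (termOfCode n a) (termOfCode n b) :=
  nodeRec_node ..

theorem termOfCode_mul (a b : ℕ) :
    termOfCode n (node 2 a b) = mulT (termOfCode n a) (termOfCode n b) :=
  nodeRec_node ..

theorem termOfCode_one (k a b : ℕ) :
    termOfCode n (node (k + 3) a b) = Constants.term ArithFunc.one :=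
  nodeRec_node ..

theorem formulaOfCode_zero (n : ℕ) : formulaOfCode 0 n = ⊥ := congrFun (nodeRec_zero ..) n

theorem formulaOfCode_equal (a b n : ℕ) :
    formulaOfCode (node 0 a b) n = termOfCode n a =' termOfCode n b :=
  congrFun (nodeRec_node ..) n

theorem formulaOfCode_lt (a b n : ℕ) :
    formulaOfCode (node 1 a b) n = ltF (termOfCode n a) (termOfCode n b) :=
  congrFun (nodeRec_node ..) n

theorem formulaOfCode_imp (a b n : ℕ) :
    formulaOfCode (node 2 a b) n = formulaOfCode a n ⟹ formulaOfCode b n :=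
  congrFun (nodeRec_node ..) n

theorem formulaOfCode_all (k a b n : ℕ) :
    formulaOfCode (node (k + 3) a b) n = ∀' formulaOfCode a (n + 1) :=
  congrFun (nodeRec_node ..) n

theorem termOfCode_surjective (n : ℕ) : Function.Surjective (termOfCode n) := by
  intro t
  induction t with
  | var i =>
    obtain i | i := i
    · exact i.elim
    · exact ⟨node 0 i 0, termOfCode_var i 0⟩
  | func f ts ih =>
    choose k hk using ih
    cases f with
    | zero => exact ⟨0, (termOfCode_zero n).trans (congrArg (func _) (Subsingleton.elim _ _))⟩
    | one =>
      exact ⟨node 3 0 0, (termOfCode_one 0 0 0).trans (congrArg (func _) (Subsingleton.elim _ _))⟩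
    | add =>
      refine ⟨node 1 (k 0) (k 1), ?_⟩
      rw [termOfCode_add, hk, hk]
      exact congrArg (func _) (FinVec.etaExpand_eq ts)
    | mul =>
      refine ⟨node 2 (k 0) (k 1), ?_⟩
      rw [termOfCode_mul, hk, hk]
      exact congrArg (func _) (FinVec.etaExpand_eq ts)

theorem formulaOfCode_surjective (φ : LA.BoundedFormula Empty n) :
    ∃ x, formulaOfCode x n = φ := by
  induction φ with
  | falsum => exact ⟨0, formulaOfCode_zero _⟩
  | @equal n t s =>
    obtain ⟨a, rfl⟩ := termOfCode_surjective n t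
    obtain ⟨b, rfl⟩ := termOfCode_surjective n s
    exact ⟨node 0 a b, formulaOfCode_equal a b n⟩
  | @rel n _ R ts =>
    cases R
    obtain ⟨a, ha⟩ := termOfCode_surjective n (ts 0)
    obtain ⟨b, hb⟩ := termOfCode_surjective n (ts 1)
    refine ⟨node 1 a b, ?_⟩
    rw [formulaOfCode_lt, ha, hb]
    exact congrArg (BoundedFormula.rel _) (FinVec.etaExpand_eq ts)
  | @imp n φ ψ ihφ ihψ =>
    obtain ⟨a, rfl⟩ := ihφ
    obtain ⟨b, rfl⟩ := ihψ
    exact ⟨node 2 a b, formulaOfCode_imp a b n⟩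
  | @all n φ ih =>
    obtain ⟨a, rfl⟩ := ih
    exact ⟨node 3 a 0, formulaOfCode_all 0 a 0 n⟩

theorem encode_map_encode {α : Type*} [Encodable α] (l : List α) :
    Encodable.encode (l.map Encodable.encode) = Encodable.encode l := by
  induction l with
  | nil => rfl
  | cons a l ih => rw [List.map_cons, Encodable.encode_list_cons, ih, Encodable.encode_list_cons,
      Encodable.encode_nat]

theorem godelCode_injective : Function.Injective godelCode := fun θ θ' h =>
  eq_of_heq (Sigma.mk.inj (BoundedFormula.listEncode_sigma_injective (a₁ := ⟨0, θ⟩) (a₂ := ⟨0, θ'⟩)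
    (Encodable.encode_injective h))).2

/-- The function sending the Gödel code of a sentence to the Gödel code of its negation. As `∼θ`
is `θ ⟹ ⊥`, its list of symbols is that of `θ` between `3`, which encodes the implication, and `11`,
which encodes `⊥`. -/
def negCode (n : ℕ) : ℕ := Encodable.encode (3 :: (Denumerable.ofNat (List ℕ) n ++ [11]))

theorem godelCode_not (θ : LA.Sentence) : godelCode (∼θ) = negCode (godelCode θ) := by
  rw [godelCode, godelCode, negCode, ← encode_map_encode θ.listEncode, Denumerable.ofNat_encode,
    ← encode_map_encode (BoundedFormula.listEncode _)]
  exact congrArg Encodable.encode (List.map_append (l₁ := Sum.inr (Sum.inr 0) :: θ.listEncode))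

theorem primrec_negCode : Primrec negCode := by
  unfold negCode
  fun_prop

/-- The encodings of the symbols of the term coded by `t`. -/
def termTokens (n t : ℕ) : List ℕ := (termOfCode n t).listEncode.map Encodable.encode

/-- The encodings of the symbols of the formula coded by `x`. -/
def formulaTokens (n x : ℕ) : List ℕ := (formulaOfCode x n).listEncode.map Encodable.encode

theorem encode_termTokens (n t : ℕ) :
    Encodable.encode (termTokens n t) = Encodable.encode (termOfCode n t) :=
  encode_map_encode _

theorem encode_formulaTokens (x : ℕ) :
    Encodable.encode (formulaTokens 0 x) = godelCode (formulaOfCode x 0) :=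
  encode_map_encode _

theorem listEncode_apply₂ {α : Type*} (f : LA.Functions 2) (t s : LA.Term α) :
    (f.apply₂ t s).listEncode = Sum.inr ⟨2, f⟩ :: (t.listEncode ++ s.listEncode) := by
  simp [Functions.apply₂, Term.listEncode, List.finRange_succ]

theorem termTokens_zero (n : ℕ) : termTokens n 0 = [1] := by
  rw [termTokens, termOfCode_zero]
  rfl

theorem termTokens_node (n k a b : ℕ) : termTokens n (node k a b) =
    if k = 0 then if a < n then [4 * a + 2] else [1]
    else if k = 1 then 5 :: (termTokens n a ++ termTokens n b)
    else if k = 2 then 7 :: (termTokens n a ++ termTokens n b)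
    else [3] := by
  unfold termTokens
  match k with
  | 0 =>
    by_cases h : a < n
    · rw [termOfCode_var ⟨a, h⟩, if_pos rfl, if_pos h]
      change [2 * (2 * a + 1)] = _
      ring_nf
    · rw [termOfCode_var_of_le (not_lt.1 h), if_pos rfl, if_neg h]
      rfl
  | 1 =>
    rw [termOfCode_add, ← List.map_append]
    exact congrArg (List.map _) (listEncode_apply₂ ..)
  | 2 =>
    rw [termOfCode_mul, ← List.map_append]
    exact congrArg (List.map _) (listEncode_apply₂ ..)
  | k + 3 =>
    rw [termOfCode_one]
    rfl

theorem formulaTokens_zero (n : ℕ) : formulaTokens n 0 = [4 * n + 11] := by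
  rw [formulaTokens, formulaOfCode_zero]
  change [2 * (2 * (n + 2) + 1) + 1] = _
  ring_nf

theorem formulaTokens_node (n k a b : ℕ) : formulaTokens n (node k a b) =
    if k = 0 then [2 * Nat.pair n (Encodable.encode (termTokens n a)),
      2 * Nat.pair n (Encodable.encode (termTokens n b))]
    else if k = 1 then [1, 4 * n + 3, 2 * Nat.pair n (Encodable.encode (termTokens n a)),
      2 * Nat.pair n (Encodable.encode (termTokens n b))]
    else if k = 2 then 3 :: (formulaTokens n a ++ formulaTokens n b)
    else 7 :: formulaTokens (n + 1) a := by
  simp only [formulaTokens, encode_termTokens]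
  match k with
  | 0 =>
    rw [formulaOfCode_equal]
    rfl
  | 1 =>
    rw [formulaOfCode_lt, show 4 * n + 3 = 2 * (2 * n + 1) + 1 by ring]
    rfl
  | 2 =>
    rw [formulaOfCode_imp, ← List.map_append]
    rfl
  | k + 3 =>
    rw [formulaOfCode_all]
    rfl

theorem primrec_termTokens : Primrec₂ termTokens :=
  primrec_of_node (z := fun _ => [1]) (u := fun _ n => n)
    (f := fun (n, (k, a, _), t, s) =>
      if k = 0 then if a < n then [4 * a + 2] else [1]
      else if k = 1 then 5 :: (t ++ s)
      else if k = 2 then 7 :: (t ++ s)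
      else [3])
    (by fun_prop) Primrec₂.right
    (primrec_ite_four (by fun_prop) (by fun_prop) (by fun_prop) (by fun_prop) (by fun_prop))
    termTokens_zero termTokens_node

theorem primrec_formulaTokens : Primrec₂ formulaTokens := by
  have hatom (p : ℕ × (ℕ × ℕ × ℕ) × List ℕ × List ℕ → ℕ) (hp : Primrec p) :
      Primrec fun q => 2 * Nat.pair q.1 (Encodable.encode (termTokens q.1 (p q))) :=
    (by fun_prop : Primrec fun q : ℕ × List ℕ => 2 * Nat.pair q.1 (Encodable.encode q.2)).comp
      (Primrec.fst.pair (primrec_termTokens.comp Primrec.fst hp))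
  have ha := hatom (fun q => q.2.1.2.1) (by fun_prop)
  have hb := hatom (fun q => q.2.1.2.2) (by fun_prop)
  refine primrec_of_node (z := fun n => [4 * n + 11]) (u := fun k n => if k < 3 then n else n + 1)
    (f := fun (n, (k, a, b), φ, ψ) =>
      if k = 0 then [2 * Nat.pair n (Encodable.encode (termTokens n a)),
        2 * Nat.pair n (Encodable.encode (termTokens n b))]
      else if k = 1 then [1, 4 * n + 3, 2 * Nat.pair n (Encodable.encode (termTokens n a)),
        2 * Nat.pair n (Encodable.encode (termTokens n b))]
      else if k = 2 then 3 :: (φ ++ ψ)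
      else 7 :: φ)
    (by fun_prop) ?_ ?_ formulaTokens_zero fun n k a b => ?_
  · exact primrec_ite_lt (by fun_prop) (by fun_prop) (by fun_prop) (by fun_prop)
  · exact primrec_ite_four (by fun_prop) (primrec_cons ha (primrec_cons hb (by fun_prop)))
      (primrec_cons (by fun_prop) (primrec_cons (by fun_prop)
        (primrec_cons ha (primrec_cons hb (by fun_prop))))) (by fun_prop) (by fun_prop)
  · rw [formulaTokens_node]
    match k with
    | 0 | 1 | 2 | k + 3 => rfl

end Codes

/-! ### Henkin valuations -/

/-- The value of the variable `&i` in an environment, which lists the values of the variables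
starting with the one bound last. Variables out of range get the value `0`. -/
def lookup {α : Type*} [Zero α] (l : List α) (i : ℕ) : α := l.reverse.getD i 0

theorem lookup_cons_of_lt {α : Type*} [Zero α] (a : α) {l : List α} {i : ℕ} (h : i < l.length) :
    lookup (a :: l) i = lookup l i := by
  rw [lookup, List.reverse_cons, List.getD_append _ _ _ _ (by simpa using h), lookup]

theorem lookup_cons_length {α : Type*} [Zero α] (a : α) (l : List α) :
    lookup (a :: l) l.length = a := by
  simp [lookup]

section Semantics

variable {M : Type*} [LA.Structure M]

/-- The assignment of values to variables given by an environment. -/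
def assignment (l : List M) (i : Fin l.length) : M := lookup l i

theorem assignment_cons (a : M) (l : List M) :
    assignment (a :: l) = (Fin.snoc (assignment l) a : Fin (l.length + 1) → M) := by
  funext i
  refine Fin.lastCases ?_ (fun j => ?_) i
  · rw [Fin.snoc_last]
    exact lookup_cons_length a l
  · rw [Fin.snoc_castSucc]
    exact lookup_cons_of_lt a j.2

/-- The value of the term coded by `t` in the environment `l`. -/
def termValue (l : List M) (t : ℕ) : M :=
  (termOfCode l.length t).realize (Sum.elim default (assignment l))

/-- The truth of the formula coded by `x` in the environment `l`. -/
def IsTrue (l : List M) (x : ℕ) : Prop :=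
  (formulaOfCode x l.length).Realize default (assignment l)

theorem termValue_zero (l : List M) : termValue l 0 = 0 := by
  rw [termValue, termOfCode_zero]
  exact realize_zero _

theorem termValue_node (l : List M) (k a b : ℕ) : termValue l (node k a b) =
    if k = 0 then lookup l a
    else if k = 1 then termValue l a + termValue l b
    else if k = 2 then termValue l a * termValue l b
    else 1 := by
  unfold termValue
  match k with
  | 0 =>
    rcases lt_or_ge a l.length with h | h
    · rw [termOfCode_var ⟨a, h⟩]
      rfl
    · rw [termOfCode_var_of_le h, if_pos rfl, lookup, List.getD_eq_default _ _ (by simpa using h)]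
      exact realize_zero _
  | 1 =>
    rw [termOfCode_add]
    exact realize_add ..
  | 2 =>
    rw [termOfCode_mul]
    exact realize_mul ..
  | k + 3 =>
    rw [termOfCode_one]
    exact realize_one _

theorem not_isTrue_zero (l : List M) : ¬ IsTrue l 0 := by
  rw [IsTrue, formulaOfCode_zero]
  exact id

theorem isTrue_equal (l : List M) (a b : ℕ) :
    IsTrue l (node 0 a b) ↔ termValue l a = termValue l b := by
  rw [IsTrue, formulaOfCode_equal]
  exact BoundedFormula.realize_bdEqual ..

theorem isTrue_lt (l : List M) (a b : ℕ) :
    IsTrue l (node 1 a b) ↔ termValue l a < termValue l b := by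
  rw [IsTrue, formulaOfCode_lt]
  exact BoundedFormula.realize_rel₂

theorem isTrue_imp (l : List M) (a b : ℕ) :
    IsTrue l (node 2 a b) ↔ (IsTrue l a → IsTrue l b) := by
  rw [IsTrue, formulaOfCode_imp]
  exact BoundedFormula.realize_imp

theorem isTrue_all (l : List M) (k a b : ℕ) :
    IsTrue l (node (k + 3) a b) ↔ ∀ z : M, IsTrue (z :: l) a := by
  simp only [IsTrue, formulaOfCode_all, BoundedFormula.realize_all, assignment_cons]
  rfl

theorem isTrue_nil (x : ℕ) : IsTrue ([] : List M) x ↔ M ⊨ (formulaOfCode x 0 : LA.Sentence) :=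
  iff_of_eq (congrArg (BoundedFormula.Realize _ _) (funext fun i => i.elim0))

end Semantics

/-- The closed terms of arithmetic with Henkin constants, represented by their codes: the trees
labelled `0` are the Henkin constants. -/
def Herbrand : Type := ℕ

namespace Herbrand

instance : Primcodable Herbrand := inferInstanceAs (Primcodable ℕ)

instance : LA.Structure Herbrand where
  funMap := fun {_} f => match f with
    | .zero => fun _ => Nat.zero
    | .one => fun _ => node 3 0 0
    | .add => fun v => node 1 (v 0) (v 1)
    | .mul => fun v => node 2 (v 0) (v 1)
  RelMap := fun _ _ => False

/-- The Henkin constant for the quantification of the formula coded by `x` in an environment. -/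
def witness (x : ℕ) (ρ : List Herbrand) : Herbrand := node 0 x (ρ.foldr (node 0) 0)

/-- The homomorphism from the Herbrand universe given by a map preserving the operations. -/
def homOfMap {M : Type*} [LA.Structure M] (v : Herbrand → M) (zero : v 0 = 0) (one : v 1 = 1)
    (add : ∀ a b, v (a + b) = v a + v b) (mul : ∀ a b, v (a * b) = v a * v b) :
    Herbrand →[LA] M where
  toFun := v
  map_fun' := by
    intro _ f a
    cases f with
    | zero => exact zero.trans (congrArg (Structure.funMap _) (Subsingleton.elim _ _))
    | one => exact one.trans (congrArg (Structure.funMap _) (Subsingleton.elim _ _))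
    | add =>
      exact (add (a 0) (a 1)).trans
        (congrArg (Structure.funMap _) (FinVec.etaExpand_eq (v ∘ a)))
    | mul =>
      exact (mul (a 0) (a 1)).trans
        (congrArg (Structure.funMap _) (FinVec.etaExpand_eq (v ∘ a)))
  map_rel' := fun _ _ h => h.elim

section Hom

variable {M : Type*} [LA.Structure M]

theorem map_zero (v : Herbrand →[LA] M) : v 0 = 0 :=
  (v.map_fun _ _).trans (congrArg _ (Subsingleton.elim _ _))

theorem map_one (v : Herbrand →[LA] M) : v 1 = 1 :=
  (v.map_fun _ _).trans (congrArg _ (Subsingleton.elim _ _))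

theorem map_add (v : Herbrand →[LA] M) (a b : Herbrand) : v (a + b) = v a + v b :=
  (v.map_fun _ _).trans (congrArg _ (FinVec.etaExpand_eq (v ∘ ![a, b])).symm)

theorem map_mul (v : Herbrand →[LA] M) (a b : Herbrand) : v (a * b) = v a * v b :=
  (v.map_fun _ _).trans (congrArg _ (FinVec.etaExpand_eq (v ∘ ![a, b])).symm)

theorem map_lookup (v : Herbrand →[LA] M) (ρ : List Herbrand) (i : ℕ) :
    v (lookup ρ i) = lookup (ρ.map v) i := by
  rw [lookup, lookup, ← List.map_reverse, ← map_zero v, List.getD_map]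

theorem map_termValue (v : Herbrand →[LA] M) (ρ : List Herbrand) (t : ℕ) :
    v (termValue ρ t) = termValue (ρ.map v) t := by
  induction t using node_induction with
  | zero => rw [termValue_zero, termValue_zero, map_zero]
  | node k a b iha ihb =>
    simp only [termValue_node, apply_ite v, map_lookup, map_add, map_mul, map_one, iha, ihb]

theorem exists_hom_witness (M : Type*) [LA.Structure M] : ∃ v : Herbrand →[LA] M,
    ∀ x (ρ : List Herbrand), IsTrue (v (witness x ρ) :: ρ.map v) x →
      ∀ a : M, IsTrue (a :: ρ.map v) x := by
  classical
  have : Nonempty M := ⟨0⟩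
  -- A tree is evaluated simultaneously as a term and as a list of terms. A Henkin constant denotes
  -- a counterexample to its formula whenever there is one.
  let f (k x _ : ℕ) (p q : M × List M) : M × List M :=
    (if k = 0 then Classical.epsilon fun a => ¬ IsTrue (a :: q.2) x
      else if k = 1 then p.1 + q.1
      else if k = 2 then p.1 * q.1
      else 1, p.1 :: q.2)
  let F : ℕ → M × List M := nodeRec (0, []) f
  have hF (k a b : ℕ) := nodeRec_node (0, []) f k a b
  let v : Herbrand →[LA] M := homOfMap (fun a => (F a).1) (congrArg Prod.fst (nodeRec_zero ..))
    (congrArg Prod.fst (hF 3 0 0)) (fun a b => congrArg Prod.fst (hF 1 a b))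
    (fun a b => congrArg Prod.fst (hF 2 a b))
  have hlist (ρ : List Herbrand) : (F (ρ.foldr (node 0) 0)).2 = ρ.map v := by
    induction ρ with
    | nil => exact congrArg Prod.snd (nodeRec_zero ..)
    | cons a ρ ih => exact (congrArg Prod.snd (hF 0 a _)).trans (congrArg _ ih)
  have hw (x : ℕ) (ρ : List Herbrand) :
      v (witness x ρ) = Classical.epsilon fun a => ¬ IsTrue (a :: ρ.map v) x := by
    rw [← hlist]
    exact congrArg Prod.fst (hF 0 x _)
  refine ⟨v, fun x ρ h => ?_⟩
  by_contra! ha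
  exact Classical.epsilon_spec ha (hw x ρ ▸ h)

end Hom

end Herbrand

/-- The atomic propositions describing a structure with Henkin constants: the truth of a formula at
an environment, and the equality and the order of two elements of the Herbrand universe. -/
abbrev Atom : Type := (ℕ × List Herbrand) ⊕ (Herbrand × Herbrand) ⊕ (Herbrand × Herbrand)

namespace Atom

/-- The proposition that the formula coded by `x` is true in the environment `ρ`. -/
abbrev holds (x : ℕ) (ρ : List Herbrand) : Atom := .inl (x, ρ)

/-- The proposition that `a` equals `b`. -/
abbrev equal (a b : Herbrand) : Atom := .inr (.inl (a, b))

/-- The proposition that `a` is less than `b`. -/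
abbrev less (a b : Herbrand) : Atom := .inr (.inr (a, b))

end Atom

/-- A valuation of the atomic propositions is a Henkin valuation if it respects the equality
axioms and the semantics of formulas, a universal formula being true as soon as its witness
satisfies it. -/
structure IsHenkin (W : Atom → Prop) : Prop where
  falsum ρ : ¬ W (.holds 0 ρ)
  equal x y ρ : W (.holds (node 0 x y) ρ) ↔ W (.equal (termValue ρ x) (termValue ρ y))
  less x y ρ : W (.holds (node 1 x y) ρ) ↔ W (.less (termValue ρ x) (termValue ρ y))
  imp x y ρ : W (.holds (node 2 x y) ρ) ↔ (W (.holds x ρ) → W (.holds y ρ))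
  all k x y ρ a : W (.holds (node (k + 3) x y) ρ) → W (.holds x (a :: ρ))
  witness k x y ρ : W (.holds x (Herbrand.witness x ρ :: ρ)) → W (.holds (node (k + 3) x y) ρ)
  refl a : W (.equal a a)
  symm a b : W (.equal a b) → W (.equal b a)
  trans a b c : W (.equal a b) → W (.equal b c) → W (.equal a c)
  add a b c d : W (.equal a b) → W (.equal c d) → W (.equal (a + c) (b + d))
  mul a b c d : W (.equal a b) → W (.equal c d) → W (.equal (a * c) (b * d))
  less_congr a b c d : W (.equal a b) → W (.equal c d) → W (.less a c) → W (.less b d)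

theorem exists_isHenkin (M : Type*) [LA.Structure M] :
    ∃ W, IsHenkin W ∧ ∀ x, W (.holds x []) ↔ IsTrue ([] : List M) x := by
  obtain ⟨v, hv⟩ := Herbrand.exists_hom_witness M
  let W : Atom → Prop := Sum.elim (fun p => IsTrue (p.2.map v) p.1)
    (Sum.elim (fun p => v p.1 = v p.2) fun p => v p.1 < v p.2)
  refine ⟨W, ?_, fun x => Iff.rfl⟩
  constructor <;> intros <;> simp only [W, Sum.elim_inl, Sum.elim_inr, List.map_cons,
    isTrue_equal, isTrue_lt, isTrue_imp, isTrue_all, Herbrand.map_termValue, Herbrand.map_add,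
    Herbrand.map_mul] at *
  case falsum => exact not_isTrue_zero _
  case all h => exact h _
  case witness h => exact hv _ _ h
  all_goals simp_all only

namespace IsHenkin

variable {W : Atom → Prop} (hW : IsHenkin W)

/-- Equality of elements of the Herbrand universe according to a Henkin valuation. -/
def setoid : Setoid Herbrand where
  r a b := W (.equal a b)
  iseqv := ⟨hW.refl, hW.symm _ _, hW.trans _ _ _⟩

/-- The term model of a Henkin valuation. -/
def TermModel : Type := Quotient hW.setoid

instance : LA.Structure hW.TermModel where
  funMap := fun {_} f => match f with
    | .zero => fun _ => Quotient.mk hW.setoid 0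
    | .one => fun _ => Quotient.mk hW.setoid 1
    | .add => fun v => Quotient.map₂ (· + ·) (fun _ _ h _ _ h' => hW.add _ _ _ _ h h') (v 0) (v 1)
    | .mul => fun v => Quotient.map₂ (· * ·) (fun _ _ h _ _ h' => hW.mul _ _ _ _ h h') (v 0) (v 1)
  RelMap := fun {_} r => match r with
    | .lt => fun v => Quotient.liftOn₂ (v 0) (v 1) (fun a b => W (.less a b)) fun _ _ _ _ h h' =>
        propext ⟨hW.less_congr _ _ _ _ h h', hW.less_congr _ _ _ _ (hW.symm _ _ h) (hW.symm _ _ h')⟩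

/-- The canonical map to the term model. -/
def toTermModel : Herbrand →[LA] hW.TermModel :=
  Herbrand.homOfMap (Quotient.mk hW.setoid) rfl rfl (fun _ _ => rfl) fun _ _ => rfl

theorem toTermModel_surjective : Function.Surjective hW.toTermModel := Quotient.mk_surjective

theorem toTermModel_eq_iff {a b : Herbrand} : hW.toTermModel a = hW.toTermModel b ↔
    W (.equal a b) :=
  Quotient.eq (r := hW.setoid)

theorem toTermModel_lt_iff {a b : Herbrand} : hW.toTermModel a < hW.toTermModel b ↔
    W (.less a b) :=
  Iff.rfl

theorem isTrue_toTermModel_iff (ρ : List Herbrand) (x : ℕ) :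
    IsTrue (ρ.map hW.toTermModel) x ↔ W (.holds x ρ) := by
  induction x using node_induction generalizing ρ with
  | zero => exact iff_of_false (not_isTrue_zero _) (hW.falsum ρ)
  | node k a b iha ihb =>
    match k with
    | 0 => rw [isTrue_equal, ← Herbrand.map_termValue, ← Herbrand.map_termValue, toTermModel_eq_iff,
        hW.equal]
    | 1 => rw [isTrue_lt, ← Herbrand.map_termValue, ← Herbrand.map_termValue, toTermModel_lt_iff,
        hW.less]
    | 2 => rw [isTrue_imp, iha, ihb, hW.imp]
    | k + 3 =>
      simp only [isTrue_all, hW.toTermModel_surjective.forall, ← List.map_cons, iha]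
      exact ⟨fun h => hW.witness k a b ρ (h _), fun h c => hW.all k a b ρ c h⟩

end IsHenkin

theorem isSatisfiable_image_formulaOfCode_iff (X : Set ℕ) :
    Theory.IsSatisfiable ((formulaOfCode · 0) '' X : LA.Theory) ↔
      ∃ W, IsHenkin W ∧ ∀ x ∈ X, W (.holds x []) := by
  constructor
  · rintro ⟨M⟩
    obtain ⟨W, hW, hM⟩ := exists_isHenkin M
    exact ⟨W, hW, fun x hx => (hM x).2 <| (isTrue_nil x).2 <|
      Theory.realize_sentence_of_mem (T := (formulaOfCode · 0) '' X) ⟨x, hx, rfl⟩⟩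
  · rintro ⟨W, hW, hX⟩
    have : hW.TermModel ⊨ ((formulaOfCode · 0) '' X : LA.Theory) := by
      refine Theory.model_iff _ |>.2 ?_
      rintro _ ⟨x, hx, rfl⟩
      exact (isTrue_nil x).1 ((hW.isTrue_toTermModel_iff [] x).2 (hX x hx))
    have : Nonempty hW.TermModel := ⟨hW.toTermModel 0⟩
    exact Theory.Model.isSatisfiable hW.TermModel

/-! ### Recursive enumerability of provability -/

/-- Clauses which hold for all values of the parameters under exactly the Henkin valuations. -/
def henkinClauses (k x y : ℕ) (ρ : List Herbrand) (a b c d : Herbrand) : List (Clause Atom) :=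
  [([.holds 0 ρ], []),
    ([.holds (node 0 x y) ρ], [.equal (termValue ρ x) (termValue ρ y)]),
    ([.equal (termValue ρ x) (termValue ρ y)], [.holds (node 0 x y) ρ]),
    ([.holds (node 1 x y) ρ], [.less (termValue ρ x) (termValue ρ y)]),
    ([.less (termValue ρ x) (termValue ρ y)], [.holds (node 1 x y) ρ]),
    ([.holds (node 2 x y) ρ, .holds x ρ], [.holds y ρ]),
    ([], [.holds x ρ, .holds (node 2 x y) ρ]),
    ([.holds y ρ], [.holds (node 2 x y) ρ]),
    ([.holds (node (k + 3) x y) ρ], [.holds x (a :: ρ)]),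
    ([.holds x (Herbrand.witness x ρ :: ρ)], [.holds (node (k + 3) x y) ρ]),
    ([], [.equal a a]),
    ([.equal a b], [.equal b a]),
    ([.equal a b, .equal b c], [.equal a c]),
    ([.equal a b, .equal c d], [.equal (a + c) (b + d)]),
    ([.equal a b, .equal c d], [.equal (a * c) (b * d)]),
    ([.equal a b, .equal c d, .less a c], [.less b d])]

theorem isHenkin_iff {W : Atom → Prop} :
    IsHenkin W ↔ ∀ k x y ρ a b c d, ∀ C ∈ henkinClauses k x y ρ a b c d, C.Holds W := by
  simp only [henkinClauses, Clause.Holds, List.forall_mem_cons, List.not_mem_nil,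
    List.exists_mem_cons_iff, false_and, exists_false, or_false, false_imp_iff, implies_true,
    and_true]
  simp only [forall_and, forall_const, and_imp]
  constructor
  · intro h
    exact ⟨h.falsum, fun x y ρ => (h.equal x y ρ).1, fun x y ρ => (h.equal x y ρ).2,
      fun x y ρ => (h.less x y ρ).1, fun x y ρ => (h.less x y ρ).2, fun x y ρ => (h.imp x y ρ).1,
      fun x y ρ => or_iff_not_imp_left.2 fun hx => (h.imp x y ρ).2 fun hx' => (hx hx').elim,
      fun x y ρ hy => (h.imp x y ρ).2 fun _ => hy, h.all, h.witness, h.refl, h.symm, h.trans,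
      h.add, h.mul, h.less_congr⟩
  · rintro ⟨falsum, equal_left, equal_right, less_left, less_right, imp_elim, imp_left, imp_right,
      all, witness, refl, symm, trans, add, mul, less_congr⟩
    exact {
      falsum, all, witness, refl, symm, trans, add, mul, less_congr
      equal := fun x y ρ => ⟨equal_left x y ρ, equal_right x y ρ⟩
      less := fun x y ρ => ⟨less_left x y ρ, less_right x y ρ⟩
      imp := fun x y ρ => ⟨imp_elim x y ρ, fun h =>
        (imp_left x y ρ).elim (fun hx => imp_right x y ρ (h hx)) id⟩ }

section Primrec

variable {α : Type*} [Primcodable α]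

@[fun_prop]
theorem primrec_herbrandAdd {f g : α → Herbrand} (hf : Primrec f) (hg : Primrec g) :
    Primrec fun x => f x + g x :=
  primrec_node (.const 1) hf hg

@[fun_prop]
theorem primrec_herbrandMul {f g : α → Herbrand} (hf : Primrec f) (hg : Primrec g) :
    Primrec fun x => f x * g x :=
  primrec_node (.const 2) hf hg

@[fun_prop]
theorem primrec_witness {f : α → ℕ} {g : α → List Herbrand} (hf : Primrec f) (hg : Primrec g) :
    Primrec fun x => Herbrand.witness (f x) (g x) :=
  primrec_node (.const 0) hf (Primrec.list_foldr (h := fun _ q => node 0 q.1 q.2) hg (.const 0)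
    (primrec_node (.const 0) (Primrec.fst.comp .snd) (Primrec.snd.comp .snd)).to₂)

@[fun_prop]
theorem primrec_lookup {f : α → List Herbrand} {g : α → ℕ} (hf : Primrec f) (hg : Primrec g) :
    Primrec fun x => lookup (f x) (g x) :=
  primrec_getD (Primrec.list_reverse.comp hf) hg (.const 0)

theorem primrec₂_termValue : Primrec₂ (termValue : List Herbrand → ℕ → Herbrand) :=
  primrec_of_node (z := fun _ => 0) (u := fun _ ρ => ρ)
    (f := fun (ρ, (k, a, _), t, s) =>
      if k = 0 then lookup ρ a else if k = 1 then t + s else if k = 2 then t * s else 1)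
    (by fun_prop) Primrec₂.right
    (primrec_ite_four (by fun_prop) (by fun_prop) (by fun_prop) (by fun_prop) (by fun_prop))
    termValue_zero termValue_node

@[fun_prop]
theorem primrec_termValue {f : α → List Herbrand} {g : α → ℕ} (hf : Primrec f) (hg : Primrec g) :
    Primrec fun x => termValue (f x) (g x) := primrec₂_termValue.comp hf hg

@[fun_prop]
theorem primrec_henkinClauses {k x y : α → ℕ} {ρ : α → List Herbrand} {a b c d : α → Herbrand}
    (hk : Primrec k) (hx : Primrec x) (hy : Primrec y) (hρ : Primrec ρ) (ha : Primrec a)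
    (hb : Primrec b) (hc : Primrec c) (hd : Primrec d) :
    Primrec fun p => henkinClauses (k p) (x p) (y p) (ρ p) (a p) (b p) (c p) (d p) := by
  unfold henkinClauses
  fun_prop

end Primrec

theorem models_iff_not_exists_isHenkin (T : LA.Theory) (x : ℕ) :
    (T ⊨ᵇ (formulaOfCode x 0 : LA.Sentence)) ↔ ¬ ∃ W, IsHenkin W ∧ W (.holds (node 2 x 0) []) ∧
      ∀ y, formulaOfCode y 0 ∈ T → W (.holds y []) := by
  have himage : T ∪ {∼(formulaOfCode x 0)} =
      (formulaOfCode · 0) '' insert (node 2 x 0) ((formulaOfCode · 0) ⁻¹' T) := by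
    rw [Set.image_insert_eq, Set.image_preimage_eq _ formulaOfCode_surjective, Set.union_singleton,
      formulaOfCode_imp, formulaOfCode_zero]
    rfl
  rw [Theory.models_iff_not_satisfiable, himage, isSatisfiable_image_formulaOfCode_iff]
  simp only [Set.forall_mem_insert, Set.mem_preimage]

theorem rePred_models {T : LA.Theory} (hT : RETheory T) :
    REPred fun x => T ⊨ᵇ (formulaOfCode x 0 : LA.Sentence) := by
  obtain ⟨f, hf, hfT⟩ := hT
  obtain ⟨e, he, hdom⟩ := exists_primrec_stage hf
  let S (x : ℕ) : ℕ × ℕ × ℕ × List Herbrand × Herbrand × Herbrand × Herbrand × Herbrand →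
      List (Clause Atom) := fun (k, y, z, ρ, a, b, c, d) =>
    henkinClauses k y z ρ a b c d ++ ([], [.holds (node 2 x 0) [] ]) ::
      if e z (Encodable.encode (formulaTokens 0 y)) = true then [([], [.holds y [] ])] else []
  have hS : Primrec₂ S := by
    refine primrec_append (by fun_prop) (primrec_cons (by fun_prop) (primrec_ite_eq ?_ ?_ ?_ ?_))
    · refine he.comp (by fun_prop) (Primrec.encode.comp ?_)
      exact primrec_formulaTokens.comp (.const 0) (by fun_prop)
    all_goals fun_prop
  have hT (y : ℕ) : formulaOfCode y 0 ∈ T ↔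
      ∃ k, e k (Encodable.encode (formulaTokens 0 y)) = true := by
    rw [hfT, ← encode_formulaTokens, hdom]
  refine (Clause.rePred_not_exists_holds hS).of_eq fun x => ?_
  rw [models_iff_not_exists_isHenkin]
  have hgoal (W : Atom → Prop) (y : ℕ) : Clause.Holds W ([], [.holds y [] ]) ↔ W (.holds y []) := by
    simp [Clause.Holds]
  simp only [S, List.forall_mem_append, List.forall_mem_cons, forall_and, forall_const,
    isHenkin_iff, hT, hgoal, List.mem_ite_nil_right, List.mem_singleton, and_imp,
    forall_eq_apply_imp_iff, Prod.forall, forall_exists_index]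

/-! ### Rosser's theorem -/

theorem rePred_provable {T : LA.Theory} (hT : RETheory T) :
    REPred fun n => ∃ θ, godelCode θ = n ∧ T ⊨ᵇ θ := by
  have hcode : Primrec fun x => Encodable.encode (formulaTokens 0 x) :=
    Primrec.encode.comp (primrec_formulaTokens.comp (.const 0) .id)
  refine (rePred_exists_eq hcode (rePred_models hT)).of_eq fun n => ?_
  simp only [encode_formulaTokens]
  exact (Function.Surjective.exists (p := fun θ => godelCode θ = n ∧ T ⊨ᵇ θ)
    formulaOfCode_surjective).symm

theorem Consistent.isSatisfiable {T : LA.Theory} (hT : Consistent T) : T.IsSatisfiable := by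
  by_contra h
  exact hT (Theory.models_sentence_iff.2 fun M => (h ⟨M⟩).elim)

theorem Consistent.not_models_not {T : LA.Theory} (hT : Consistent T) {θ : LA.Sentence}
    (hθ : T ⊨ᵇ θ) : ¬ T ⊨ᵇ ∼θ := fun hnθ =>
  have ⟨M⟩ := hT.isSatisfiable
  (Sentence.realize_not M).1 (hnθ.realize_sentence M) (hθ.realize_sentence M)

theorem exists_formula_separating_provable {T : LA.Theory} (hre : RETheory T)
    (hcons : Consistent T) : ∃ Ψ : LA.Formula (Fin 1),
      ∀ (M : Type) [LA.Structure M] [M ⊨ Q] (θ : LA.Sentence),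
        (T ⊨ᵇ ∼θ → Ψ.Realize fun _ => (godelCode θ : M)) ∧
          (T ⊨ᵇ θ → ¬ Ψ.Realize fun _ => (godelCode θ : M)) := by
  have hrefutable : REPred fun n => ∃ φ, godelCode φ = negCode n ∧ T ⊨ᵇ φ :=
    (rePred_provable hre).comp primrec_negCode.to_comp
  obtain ⟨Ψ, hΨ⟩ := exists_formula_separating hrefutable (rePred_provable hre) (by
    rintro _ ⟨φ, hφ, hTφ⟩ ⟨θ, rfl, hTθ⟩
    obtain rfl := godelCode_injective (hφ.trans (godelCode_not θ).symm)
    exact hcons.not_models_not hTθ hTφ)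
  exact ⟨Ψ, fun M _ _ θ => ⟨fun h => (hΨ M _).1 ⟨∼θ, godelCode_not θ, h⟩,
    fun h => (hΨ M _).2 ⟨θ, rfl, h⟩⟩⟩

theorem realize_diagBicond {M : Type} [LA.Structure M] [M ⊨ Q] (Ψ : LA.Formula (Fin 1))
    (θ : LA.Sentence) :
    M ⊨ diagBicond Ψ θ ↔ ((Ψ.Realize fun _ => (godelCode θ : M)) ↔ M ⊨ θ) := by
  simp only [diagBicond, Sentence.Realize, Formula.Realize, BoundedFormula.realize_iff,
    BoundedFormula.realize_subst, Q.realize_numeral]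

/-- **The Weak Diagonal Lemma implies Rosser's Theorem.** If `T` is a consistent
recursively enumerable extension of Robinson's arithmetic satisfying the Weak
Diagonal Lemma, then some sentence is independent from `T`. -/
theorem stmt15 (T : LA.Theory) (hQ : Q ⊆ T) (hcons : Consistent T) (hre : RETheory T)
    (wdl : ∀ Ψ : LA.Formula (Fin 1), ∃ θ : LA.Sentence,
      Consistent (T ∪ {diagBicond Ψ θ})) :
    ∃ ρ : LA.Sentence, ¬ (T ⊨ᵇ ρ) ∧ ¬ (T ⊨ᵇ ∼ρ) := by
  obtain ⟨Ψ, hΨ⟩ := exists_formula_separating_provable hre hcons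
  obtain ⟨θ, hθ⟩ := wdl Ψ
  obtain ⟨M⟩ := hθ.isSatisfiable
  have hMT : M ⊨ T := Theory.Model.mono M.is_model Set.subset_union_left
  have hMQ : M ⊨ Q := hMT.mono hQ
  have hdiag : (Ψ.Realize fun _ => (godelCode θ : M)) ↔ M ⊨ θ :=
    (realize_diagBicond Ψ θ).1 (M.is_model.realize_of_mem _ (Or.inr rfl))
  obtain ⟨hrefutable, hprovable⟩ := hΨ M θ
  refine ⟨θ, fun h => ?_, fun h => ?_⟩
  · exact hprovable h (hdiag.2 (h.realize_sentence M))
  · exact (Sentence.realize_not M).1 (h.realize_sentence M) (hdiag.1 (hrefutable h))
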